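/- For every integer ℓ ≥ 2 and every real x > 0, as n → ∞ the expectation of the number of joint orbits satisfies E[K_{ℓ,n}] ~ ((x·K_ℓ)^{1/ℓ}/(ℓ−1)) · n^{(ℓ−1)/ℓ}, i.e. the ratio of the two sides tends to 1. -/

import Mathlib

open Filter Topology Real MeasureTheory Asymptotics

noncomputable section

/-- Number of joint orbits of the subgroup generated by a tuple of permutations. -/
def kappa {ℓ n : ℕ} (σ : Fin ℓ → Equiv.Perm (Fin n)) : ℕ :=
  Nat.card (MulAction.orbitRel.Quotient (Subgroup.closure (Set.range σ)) (Fin n))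

/-- `Acount ℓ n k` is the number of commuting `ℓ`-tuples of permutations of `{1,…,n}`
with exactly `k` joint orbits. -/
def Acount (ℓ n k : ℕ) : ℕ :=
  Nat.card {σ : Fin ℓ → Equiv.Perm (Fin n) //
    (∀ i j, σ i * σ j = σ j * σ i) ∧ kappa σ = k}

/-- `Hpoly ℓ n x = (1/n!) ∑_k A(ℓ,n,k) x^k`. -/
def Hpoly (ℓ n : ℕ) (x : ℝ) : ℝ :=
  (1 / (n.factorial : ℝ)) * ∑ k ∈ Finset.range (n + 1), (Acount ℓ n k : ℝ) * x ^ k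

/-- Expectation, under the Ewens-like measure `P_{ℓ,n,x}`, of `g(K_{ℓ,n})`. -/
def expectK (ℓ n : ℕ) (x : ℝ) (g : ℕ → ℝ) : ℝ :=
  (∑ k ∈ Finset.range (n + 1), g k * (Acount ℓ n k : ℝ) * x ^ k) /
    (∑ k ∈ Finset.range (n + 1), (Acount ℓ n k : ℝ) * x ^ k)

/-- Mean of `K_{ℓ,n}` under `P_{ℓ,n,x}`. -/
def meanK (ℓ n : ℕ) (x : ℝ) : ℝ := expectK ℓ n x (fun k => (k : ℝ))

/-- Variance of `K_{ℓ,n}` under `P_{ℓ,n,x}`. -/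
def varK (ℓ n : ℕ) (x : ℝ) : ℝ :=
  expectK ℓ n x (fun k => ((k : ℝ) - meanK ℓ n x) ^ 2)

/-- Real Riemann zeta values (as a series), `zetaR s = ∑_{m ≥ 1} m^{-s}`. -/
def zetaR (s : ℝ) : ℝ := ∑' m : ℕ, 1 / ((m : ℝ) + 1) ^ s

/-- The constant `K_ℓ = (ℓ-1)! ζ(2)⋯ζ(ℓ)`. -/
def Kconst (ℓ : ℕ) : ℝ := ((ℓ - 1).factorial : ℝ) * ∏ j ∈ Finset.Icc 2 ℓ, zetaR (j : ℝ)

/-- The multiple series `Z^{[ℓ]}_{α_1,…,α_ℓ}(t)` with complex exponents. -/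
def Zc (ℓ : ℕ) (α : Fin ℓ → ℂ) (t : ℝ) : ℂ :=
  ∑' δ : Fin ℓ → ℕ+,
    (∏ i, ((δ i : ℕ) : ℂ) ^ (α i - 1)) *
      Complex.exp (-(((∏ i, ((δ i : ℕ) : ℝ)) * t : ℝ) : ℂ))

/-- The multiple series `Z^{[ℓ]}_{α_1,…,α_ℓ}(t)` with real exponents. -/
def Zr (ℓ : ℕ) (α : Fin ℓ → ℝ) (t : ℝ) : ℝ :=
  ∑' δ : Fin ℓ → ℕ+,
    (∏ i, ((δ i : ℕ) : ℝ) ^ (α i - 1)) *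
      Real.exp (-(∏ i, ((δ i : ℕ) : ℝ)) * t)

/-- The staircase series `Z_m^{[ℓ]}(t) = Z^{[ℓ]}_{m,m-1,…,m-ℓ+1}(t)`. -/
def Zstair (ℓ : ℕ) (m : ℤ) (t : ℝ) : ℝ :=
  Zr ℓ (fun i => (m : ℝ) - (i : ℕ)) t

/-- The inverse function `(Z_ℓ^{[ℓ]})^{-1} : (0,∞) → (0,∞)`. -/
def ZstairInv (ℓ : ℕ) (u : ℝ) : ℝ :=
  Function.invFunOn (Zstair ℓ ℓ) (Set.Ioi 0) u

/-- The function `q_{ℓ,n}(y,u,θ)` from the saddle point analysis. -/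
def qfun (ℓ n : ℕ) (y u θ : ℝ) : ℂ :=
  Complex.I * (n : ℂ) * (θ : ℂ) - (y : ℂ) * ∑' δ : Fin ℓ → ℕ+,
    (∏ i, ((δ i : ℕ) : ℂ) ^ ((ℓ : ℤ) - 2 - (i : ℕ))) *
      Complex.exp (-(((∏ i, ((δ i : ℕ) : ℝ)) * u : ℝ) : ℂ)) *
      (Complex.exp (Complex.I * (((∏ i, ((δ i : ℕ) : ℝ)) * θ : ℝ) : ℂ)) - 1)

/-- The normalizing sequence `b_n = ((x K_ℓ)^{1/(2ℓ)}/√(ℓ(ℓ-1))) n^{(ℓ-1)/(2ℓ)}`. -/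
def bseq (ℓ : ℕ) (x : ℝ) (n : ℕ) : ℝ :=
  (x * Kconst ℓ) ^ ((1 : ℝ) / (2 * (ℓ : ℝ))) / Real.sqrt ((ℓ : ℝ) * ((ℓ : ℝ) - 1)) *
    (n : ℝ) ^ (((ℓ : ℝ) - 1) / (2 * (ℓ : ℝ)))

/-- The sequence `x_n = x e^{s/b_n}`. -/
def xseq (ℓ : ℕ) (x s : ℝ) (n : ℕ) : ℝ := x * Real.exp (s / bseq ℓ x n)

/-- The saddle point sequence `t_n = (Z_ℓ^{[ℓ]})^{-1}(n/x)`. -/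
def tseq (ℓ : ℕ) (x : ℝ) (n : ℕ) : ℝ := ZstairInv ℓ ((n : ℝ) / x)

end


lemma aux_bern_up (α : ℝ) (h0 : 0 ≤ α) (h1 : α ≤ 1) (n m : ℕ) (hn : 0 < n) (hm : m ≤ n) :
    ((n - m : ℕ) : ℝ) ^ α ≤ (n:ℝ) ^ α - α * m * (n:ℝ) ^ (α - 1) := by
  have hn' : (0:ℝ) < n := by exact_mod_cast hn
  have hm' : (m:ℝ) ≤ n := by exact_mod_cast hm
  have hs : (-1:ℝ) ≤ -(m / n : ℝ) := by
    rw [neg_le_neg_iff, div_le_one hn']; exact hm'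
  have h := rpow_one_add_le_one_add_mul_self hs h0 h1
  have e : ((n - m : ℕ) : ℝ) = n * (1 + -(m / n : ℝ)) := by
    rw [Nat.cast_sub hm]; field_simp; ring
  rw [e, Real.mul_rpow hn'.le (by linarith), Real.rpow_sub hn', Real.rpow_one]
  calc (n:ℝ) ^ α * (1 + -(m / n : ℝ)) ^ α ≤ (n:ℝ) ^ α * (1 + α * -(m / n : ℝ)) := by gcongr
    _ = _ := by field_simp; ring

lemma aux_bern_lo (α η : ℝ) (h0 : 0 ≤ α) (h1 : α ≤ 1) (hη : 0 < η) (n m : ℕ) (hn : 0 < n)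
    (hm : (m:ℝ) ≤ η / (1 + η) * n) :
    (n:ℝ) ^ α - α * (1 + η) * m * (n:ℝ) ^ (α - 1) ≤ ((n - m : ℕ) : ℝ) ^ α := by
  have hn' : (0:ℝ) < n := by exact_mod_cast hn
  set s : ℝ := m / n with hs
  have hs0 : 0 ≤ s := by positivity
  have hsle : s ≤ η / (1 + η) := by rw [hs, div_le_iff₀ hn']; exact hm
  have hs1 : s * (1 + η) ≤ η := by rwa [le_div_iff₀ (by positivity)] at hsle
  have hslt : s < 1 := by nlinarith
  have hmn : m ≤ n := by
    have : (m:ℝ) ≤ n := by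
      have : s ≤ 1 := hslt.le
      rw [hs, div_le_one hn'] at this; exact this
    exact_mod_cast this
  have e : ((n - m : ℕ) : ℝ) = n * (1 - s) := by
    rw [Nat.cast_sub hmn, hs]; field_simp
  have key : 1 - α * (1 + η) * s ≤ (1 - s) ^ α := by
    have hu : (-1:ℝ) ≤ s / (1 - s) := by
      have : 0 ≤ s / (1 - s) := div_nonneg hs0 (by linarith)
      linarith
    have h := rpow_one_add_le_one_add_mul_self hu h0 h1
    have e1 : 1 + s / (1 - s) = (1 - s)⁻¹ := by
      have : (1 - s) ≠ 0 := by linarith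
      field_simp; ring
    rw [e1, Real.inv_rpow (by linarith)] at h
    have hpos : 0 < (1 - s) ^ α := Real.rpow_pos_of_pos (by linarith) _
    have h2 : s / (1 - s) ≤ (1 + η) * s := by
      rw [div_le_iff₀ (by linarith)]; nlinarith [mul_nonneg hs0 (sub_nonneg.2 hs1)]
    have h3 : ((1 - s) ^ α)⁻¹ ≤ 1 + α * (1 + η) * s := by nlinarith
    have h4 : 1 ≤ (1 + α * (1 + η) * s) * (1 - s) ^ α := by
      have := mul_le_mul_of_nonneg_right h3 hpos.le
      rwa [inv_mul_cancel₀ hpos.ne'] at this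
    have h5 : 0 ≤ α * (1 + η) * s := by positivity
    nlinarith
  rw [e, Real.mul_rpow hn'.le (by linarith), Real.rpow_sub hn', Real.rpow_one]
  calc _ = (n:ℝ) ^ α * (1 - α * (1 + η) * s) := by rw [hs]; field_simp
    _ ≤ _ := by gcongr

/-- limit of `(x/n) F(a n^{-1/ℓ})` -/
lemma aux_lim (ℓ : ℕ) (hℓ : 2 ≤ ℓ) (F : ℝ → ℝ) (K x a : ℝ) (ha : 0 < a)
    (hF : Tendsto (fun t => t ^ ℓ * F t) (𝓝[>] 0) (𝓝 K)) :
    Tendsto (fun n : ℕ => x / n * F (a * (n:ℝ) ^ ((((ℓ:ℝ) - 1) / ℓ) - 1))) atTop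
      (𝓝 (x * K / a ^ ℓ)) := by
  have hl0 : (0:ℝ) < ℓ := by exact_mod_cast (by omega : 0 < ℓ)
  have e : (((ℓ:ℝ) - 1) / ℓ) - 1 = -(1 / ℓ) := by field_simp; ring
  rw [e]
  have ht : Tendsto (fun n : ℕ => a * (n:ℝ) ^ (-(1 / (ℓ:ℝ)))) atTop (𝓝[>] 0) := by
    rw [tendsto_nhdsWithin_iff]
    constructor
    · have := ((tendsto_rpow_neg_atTop (y := 1 / (ℓ:ℝ)) (by positivity)).comp
        tendsto_natCast_atTop_atTop).const_mul a
      simpa using this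
    · filter_upwards [eventually_gt_atTop 0] with n hn
      have : (0:ℝ) < n := by exact_mod_cast hn
      simp only [Set.mem_Ioi]; positivity
  have h := ((hF.comp ht).const_mul (x / a ^ ℓ))
  refine (h.congr' ?_).trans (by rw [div_mul_eq_mul_div])
  filter_upwards [eventually_gt_atTop 0] with n hn
  have hn' : (0:ℝ) < n := by exact_mod_cast hn
  simp only [Function.comp]
  have : (a * (n:ℝ) ^ (-(1 / (ℓ:ℝ)))) ^ ℓ = a ^ ℓ / n := by
    rw [mul_pow, ← Real.rpow_natCast ((n:ℝ) ^ _) ℓ, ← Real.rpow_mul hn'.le]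
    have : -(1 / (ℓ:ℝ)) * ℓ = -1 := by field_simp
    rw [this, Real.rpow_neg_one]; rfl
  rw [this]
  field_simp

lemma aux_upper (ℓ : ℕ) (hℓ : 2 ≤ ℓ) (b : ℕ → ℝ) (hb : ∀ m, 0 ≤ b m)
    (hsum : ∀ t : ℝ, 0 < t → Summable fun m : ℕ => b m * exp (-(m * t))) (K x c : ℝ)
    (hx : 0 < x) (hc : 0 < c)
    (hF : Tendsto (fun t : ℝ => t ^ ℓ * ∑' m : ℕ, b m * exp (-(m * t))) (𝓝[>] 0) (𝓝 K))
    (hcK : x * K < (c * (((ℓ:ℝ) - 1) / ℓ)) ^ ℓ)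
    (h : ℕ → ℝ) (hpos : ∀ n, 0 < h n)
    (hrec : ∀ n : ℕ, (n:ℝ) * h n = x * ∑ m ∈ Finset.Icc 1 n, b m * h (n - m)) :
    ∃ A > 0, ∀ n : ℕ, h n ≤ A * exp (c * (n:ℝ) ^ (((ℓ:ℝ) - 1) / ℓ)) := by
  have hl0 : (2:ℝ) ≤ ℓ := by exact_mod_cast hℓ
  set α := ((ℓ:ℝ) - 1) / ℓ with hα
  have hα0 : 0 < α := div_pos (by linarith) (by linarith)
  have hα1 : α ≤ 1 := by rw [hα, div_le_one (by linarith)]; linarith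
  have hlim := aux_lim ℓ hℓ _ K x (c * α) (by positivity) hF
  rw [← hα] at hlim
  have hlt : x * K / (c * α) ^ ℓ < 1 := by rw [div_lt_one (by positivity)]; exact hcK
  obtain ⟨N, hN⟩ := eventually_atTop.1 ((hlim.eventually_lt_const hlt).and (eventually_gt_atTop 0))
  refine ⟨1 + ∑ k ∈ Finset.range N, h k, ?_, ?_⟩
  · have : 0 ≤ ∑ k ∈ Finset.range N, h k := Finset.sum_nonneg fun k _ => (hpos k).le
    linarith
  set A := 1 + ∑ k ∈ Finset.range N, h k with hA
  have hA0 : 0 < A := by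
    have : 0 ≤ ∑ k ∈ Finset.range N, h k := Finset.sum_nonneg fun k _ => (hpos k).le
    linarith
  intro n
  induction n using Nat.strong_induction_on with
  | _ n ih =>
  by_cases hnN : n < N
  · have h1 : h n ≤ A := by
      have := Finset.single_le_sum (f := h) (fun k _ => (hpos k).le) (Finset.mem_range.2 hnN)
      linarith
    have h2 : 1 ≤ exp (c * (n:ℝ) ^ α) := Real.one_le_exp (by positivity)
    nlinarith
  · obtain ⟨hN1, hn0⟩ := hN n (by omega)
    have hn' : (0:ℝ) < n := by exact_mod_cast hn0
    set t := c * α * (n:ℝ) ^ (α - 1) with ht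
    have ht0 : 0 < t := by positivity
    have hs : ∑ m ∈ Finset.Icc 1 n, b m * h (n - m) ≤
        A * exp (c * (n:ℝ) ^ α) * ∑' m : ℕ, b m * exp (-(m * t)) := by
      calc _ ≤ ∑ m ∈ Finset.Icc 1 n, A * exp (c * (n:ℝ) ^ α) * (b m * exp (-(m * t))) := by
            apply Finset.sum_le_sum
            intro m hm
            rw [Finset.mem_Icc] at hm
            have h1 := ih (n - m) (by omega)
            have h2 := aux_bern_up α hα0.le hα1 n m hn0 hm.2
            have h3 : exp (c * ((n - m : ℕ):ℝ) ^ α) ≤ exp (c * (n:ℝ) ^ α) * exp (-(m * t)) := by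
              rw [← Real.exp_add, Real.exp_le_exp, ht]
              nlinarith
            calc b m * h (n - m) ≤ b m * (A * (exp (c * (n:ℝ) ^ α) * exp (-(m * t)))) := by
                  apply mul_le_mul_of_nonneg_left _ (hb m)
                  exact h1.trans (mul_le_mul_of_nonneg_left h3 hA0.le)
              _ = _ := by ring
        _ = A * exp (c * (n:ℝ) ^ α) * ∑ m ∈ Finset.Icc 1 n, (b m * exp (-(m * t))) := by
            rw [Finset.mul_sum]
        _ ≤ _ := by
            gcongr
            exact (hsum t ht0).sum_le_tsum _ fun m _ => mul_nonneg (hb m) (exp_pos _).le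
    have h4 := hrec n
    have h5 : h n ≤ (A * exp (c * (n:ℝ) ^ α)) * (x / n * ∑' m : ℕ, b m * exp (-(m * t))) := by
      have : h n = x / n * ∑ m ∈ Finset.Icc 1 n, b m * h (n - m) := by
        field_simp; linarith
      rw [this]
      calc _ ≤ x / n * (A * exp (c * (n:ℝ) ^ α) * ∑' m : ℕ, b m * exp (-(m * t))) := by gcongr
        _ = _ := by ring
    refine h5.trans ?_
    have : 0 < A * exp (c * (n:ℝ) ^ α) := by positivity
    nlinarith

lemma aux_lower (ℓ : ℕ) (hℓ : 2 ≤ ℓ) (b : ℕ → ℝ) (hb : ∀ m, 0 ≤ b m) (hb0 : b 0 = 0)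
    (hsum : ∀ t : ℝ, 0 < t → Summable fun m : ℕ => b m * exp (-(m * t))) (K x c : ℝ)
    (hx : 0 < x) (hc : 0 < c)
    (hF : Tendsto (fun t : ℝ => t ^ ℓ * ∑' m : ℕ, b m * exp (-(m * t))) (𝓝[>] 0) (𝓝 K))
    (hcK : (c * (((ℓ:ℝ) - 1) / ℓ)) ^ ℓ < x * K)
    (h : ℕ → ℝ) (hpos : ∀ n, 0 < h n)
    (hrec : ∀ n : ℕ, (n:ℝ) * h n = x * ∑ m ∈ Finset.Icc 1 n, b m * h (n - m)) :
    ∃ A > 0, ∀ n : ℕ, A * exp (c * (n:ℝ) ^ (((ℓ:ℝ) - 1) / ℓ)) ≤ h n := by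
  have hl0 : (2:ℝ) ≤ ℓ := by exact_mod_cast hℓ
  set α := ((ℓ:ℝ) - 1) / ℓ with hα
  have hα0 : 0 < α := div_pos (by linarith) (by linarith)
  have hα1 : α ≤ 1 := by rw [hα, div_le_one (by linarith)]; linarith
  obtain ⟨η, hη0, hη⟩ : ∃ η > 0, (c * α * (1 + η)) ^ ℓ < x * K := by
    have : Tendsto (fun η : ℝ => (c * α * (1 + η)) ^ ℓ) (𝓝[>] 0) (𝓝 ((c * α * (1 + 0)) ^ ℓ)) := by
      apply Tendsto.mono_left _ nhdsWithin_le_nhds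
      apply Continuous.tendsto; fun_prop
    rw [add_zero, mul_one] at this
    obtain ⟨η, h1, h2⟩ := ((this.eventually_lt_const hcK).and self_mem_nhdsWithin).exists
    exact ⟨η, h2, h1⟩
  set a := c * α * (1 + η) with ha
  have ha0 : 0 < a := by positivity
  set δ := η / (1 + η) with hδ
  have hδ0 : 0 < δ := by positivity
  have hlim1 := aux_lim ℓ hℓ _ K x a ha0 hF
  have hlim2 := aux_lim ℓ hℓ _ K x (a / 2) (by positivity) hF
  rw [← hα] at hlim1 hlim2
  have hlim3 : Tendsto (fun n : ℕ => exp (-(δ * n * (a / 2 * (n:ℝ) ^ (α - 1))))) atTop (𝓝 0) := by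
    have h1 : Tendsto (fun n : ℕ => δ * (a / 2) * (n:ℝ) ^ α) atTop atTop :=
      ((tendsto_rpow_atTop hα0).comp tendsto_natCast_atTop_atTop).const_mul_atTop (by positivity)
    refine (Real.tendsto_exp_neg_atTop_nhds_zero.comp h1).congr' ?_
    filter_upwards [eventually_gt_atTop 0] with n hn
    have hn' : (0:ℝ) < n := by exact_mod_cast hn
    simp only [Function.comp]
    rw [Real.rpow_sub hn', Real.rpow_one]
    congr 2
    field_simp
  have hlim := hlim1.sub (hlim3.mul hlim2)
  rw [zero_mul, sub_zero] at hlim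
  have hlt : 1 < x * K / a ^ ℓ := by rw [one_lt_div (by positivity)]; exact hη
  obtain ⟨N, hN⟩ := eventually_atTop.1 ((hlim.eventually_const_lt hlt).and (eventually_gt_atTop 0))
  obtain ⟨A, hA0, hA⟩ : ∃ A > 0, ∀ n < N, A * exp (c * (n:ℝ) ^ α) ≤ h n := by
    clear hN
    induction N with
    | zero => exact ⟨1, one_pos, fun n hn => absurd hn (by omega)⟩
    | succ N ih =>
      obtain ⟨A, hA0, hA⟩ := ih
      refine ⟨min A (h N / exp (c * (N:ℝ) ^ α)), lt_min hA0 (div_pos (hpos N) (exp_pos _)), ?_⟩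
      intro n hn
      rcases Nat.lt_succ_iff_lt_or_eq.1 hn with hn | rfl
      · exact (mul_le_mul_of_nonneg_right (min_le_left _ _) (exp_pos _).le).trans (hA n hn)
      · refine (mul_le_mul_of_nonneg_right (min_le_right _ _) (exp_pos _).le).trans ?_
        rw [div_mul_cancel₀ _ (exp_pos _).ne']
  refine ⟨A, hA0, ?_⟩
  intro n
  induction n using Nat.strong_induction_on with
  | _ n ih =>
  by_cases hnN : n < N
  · exact hA n hnN
  · obtain ⟨hN1, hn0⟩ := hN n (by omega)
    have hn' : (0:ℝ) < n := by exact_mod_cast hn0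
    have hδ1 : δ < 1 := by rw [hδ, div_lt_one (by positivity)]; linarith
    set t := a * (n:ℝ) ^ (α - 1) with ht
    have ht0 : 0 < t := by positivity
    have ht2 : a / 2 * (n:ℝ) ^ (α - 1) = t / 2 := by rw [ht]; ring
    rw [ht2] at hN1
    set E := exp (-(δ * n * (t / 2))) with hE
    set S := (Finset.Icc 1 n).filter (fun m : ℕ => (m:ℝ) ≤ δ * n) with hS
    have hsplit : ∑' m : ℕ, b m * exp (-(m * t)) ≤
        ∑ m ∈ S, b m * exp (-(m * t)) + E * ∑' m : ℕ, b m * exp (-(m * (t / 2))) := by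
      rw [← tsum_mul_left]
      have hfs : HasSum (fun m : ℕ => if m ∈ S then b m * exp (-(m * t)) else 0)
          (∑ m ∈ S, b m * exp (-(m * t))) := by
        have : HasSum (fun m : ℕ => if m ∈ S then b m * exp (-(m * t)) else 0)
            (∑ m ∈ S, if m ∈ S then b m * exp (-(m * t)) else 0) :=
          hasSum_sum_of_ne_finset_zero (fun m hm => by simp [hm])
        convert this using 1
        exact Finset.sum_congr rfl fun m hm => by simp [hm]
      have hs2 := (hsum (t / 2) (by positivity)).mul_left E
      rw [← hfs.tsum_eq, ← hfs.summable.tsum_add hs2]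
      apply (hsum t ht0).tsum_le_tsum _ (hfs.summable.add hs2)
      intro m
      have hnn : 0 ≤ E * (b m * exp (-(m * (t / 2)))) :=
        mul_nonneg (exp_pos _).le (mul_nonneg (hb m) (exp_pos _).le)
      by_cases hm : m ∈ S
      · simp only [hm, if_true]; linarith
      · simp only [hm, if_false, zero_add]
        rcases Nat.eq_zero_or_pos m with rfl | hm0
        · simp [hb0]
        · have hgt : δ * n < m := by
            by_contra hcon
            push Not at hcon
            apply hm
            rw [hS, Finset.mem_filter, Finset.mem_Icc]
            refine ⟨⟨hm0, ?_⟩, hcon⟩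
            have : (m:ℝ) ≤ n := by nlinarith
            exact_mod_cast this
          have : exp (-(m * t)) ≤ E * exp (-(m * (t / 2))) := by
            rw [hE, ← Real.exp_add, Real.exp_le_exp]; nlinarith
          calc _ ≤ b m * (E * exp (-(m * (t / 2)))) := mul_le_mul_of_nonneg_left this (hb m)
            _ = _ := by ring
    have hs : A * exp (c * (n:ℝ) ^ α) * ∑ m ∈ S, b m * exp (-(m * t)) ≤
        ∑ m ∈ Finset.Icc 1 n, b m * h (n - m) := by
      rw [Finset.mul_sum]
      calc _ ≤ ∑ m ∈ S, b m * h (n - m) := by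
            apply Finset.sum_le_sum
            intro m hm
            rw [hS, Finset.mem_filter, Finset.mem_Icc] at hm
            have h1 := ih (n - m) (by omega)
            have h2 := aux_bern_lo α η hα0.le hα1 hη0 n m hn0 hm.2
            have h3 : exp (c * (n:ℝ) ^ α) * exp (-(m * t)) ≤ exp (c * ((n - m : ℕ):ℝ) ^ α) := by
              rw [← Real.exp_add, Real.exp_le_exp, ht, ha]
              nlinarith
            calc _ = b m * (A * (exp (c * (n:ℝ) ^ α) * exp (-(m * t)))) := by ring
              _ ≤ _ := by
                  apply mul_le_mul_of_nonneg_left _ (hb m)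
                  exact (mul_le_mul_of_nonneg_left h3 hA0.le).trans h1
        _ ≤ _ := Finset.sum_le_sum_of_subset_of_nonneg (Finset.filter_subset _ _)
              fun m _ _ => mul_nonneg (hb m) (hpos _).le
    have h6 : h n = x / n * ∑ m ∈ Finset.Icc 1 n, b m * h (n - m) := by
      have := hrec n
      field_simp; linarith
    have hxn : 0 < x / n := by positivity
    have h7 : 1 ≤ x / n * ∑ m ∈ S, b m * exp (-(m * t)) := by
      have := mul_le_mul_of_nonneg_left hsplit hxn.le
      have e : x / n * (∑ m ∈ S, b m * exp (-(m * t)) +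
        E * ∑' m : ℕ, b m * exp (-(m * (t / 2)))) = x / n * ∑ m ∈ S, b m * exp (-(m * t)) +
        E * (x / n * ∑' m : ℕ, b m * exp (-(m * (t / 2)))) := by ring
      linarith
    rw [h6]
    have hP : 0 < A * exp (c * (n:ℝ) ^ α) := by positivity
    calc A * exp (c * (n:ℝ) ^ α) = A * exp (c * (n:ℝ) ^ α) * 1 := by ring
      _ ≤ A * exp (c * (n:ℝ) ^ α) * (x / n * ∑ m ∈ S, b m * exp (-(m * t))) := by gcongr
      _ = x / n * (A * exp (c * (n:ℝ) ^ α) * ∑ m ∈ S, b m * exp (-(m * t))) := by ring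
      _ ≤ _ := by gcongr

lemma aux_loglim (ℓ : ℕ) (hℓ : 2 ≤ ℓ) (b : ℕ → ℝ) (hb : ∀ m, 0 ≤ b m) (hb0 : b 0 = 0)
    (hsum : ∀ t : ℝ, 0 < t → Summable fun m : ℕ => b m * exp (-(m * t))) (K x : ℝ)
    (hK : 0 < K) (hx : 0 < x)
    (hF : Tendsto (fun t : ℝ => t ^ ℓ * ∑' m : ℕ, b m * exp (-(m * t))) (𝓝[>] 0) (𝓝 K))
    (h : ℕ → ℝ) (hpos : ∀ n, 0 < h n)
    (hrec : ∀ n : ℕ, (n:ℝ) * h n = x * ∑ m ∈ Finset.Icc 1 n, b m * h (n - m)) :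
    Tendsto (fun n : ℕ => log (h n) / (n:ℝ) ^ (((ℓ:ℝ) - 1) / ℓ)) atTop
      (𝓝 ((ℓ:ℝ) / ((ℓ:ℝ) - 1) * (x * K) ^ (1 / (ℓ:ℝ)))) := by
  have hl0 : (2:ℝ) ≤ ℓ := by exact_mod_cast hℓ
  set α := ((ℓ:ℝ) - 1) / ℓ with hα
  have hα0 : 0 < α := div_pos (by linarith) (by linarith)
  have hinv : (ℓ:ℝ) / ((ℓ:ℝ) - 1) = α⁻¹ := by rw [hα, inv_div]
  rw [hinv]
  set r := (x * K) ^ (1 / (ℓ:ℝ)) with hr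
  have hr0 : 0 < r := by positivity
  have hrl : r ^ ℓ = x * K := by
    rw [hr, ← Real.rpow_natCast, ← Real.rpow_mul (by positivity)]
    rw [one_div, inv_mul_cancel₀ (by linarith), Real.rpow_one]
  have hnα : Tendsto (fun n : ℕ => (n:ℝ) ^ α) atTop atTop :=
    (tendsto_rpow_atTop hα0).comp tendsto_natCast_atTop_atTop
  have hconst : ∀ A c : ℝ, Tendsto (fun n : ℕ => log A / (n:ℝ) ^ α + c) atTop (𝓝 c) := by
    intro A c
    simpa using (hnα.const_div_atTop (log A)).add_const c
  rw [tendsto_order]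
  constructor
  · intro d hd
    obtain ⟨c, hc1, hc2⟩ := exists_between (max_lt hd (show 0 < α⁻¹ * r by positivity))
    have hc0 : 0 < c := (le_max_right _ _).trans_lt hc1
    obtain ⟨A, hA0, hA⟩ := aux_lower ℓ hℓ b hb hb0 hsum K x c hx hc0 hF (by
      rw [← hα, ← hrl]
      apply pow_lt_pow_left₀ _ (by positivity) (by omega)
      rw [inv_mul_eq_div, lt_div_iff₀ hα0] at hc2; exact hc2) h hpos hrec
    filter_upwards [(hconst A c).eventually_const_lt ((le_max_left _ _).trans_lt hc1),
      eventually_gt_atTop 0] with n h1 hn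
    have hn' : (0:ℝ) < n := by exact_mod_cast hn
    have hp : 0 < (n:ℝ) ^ α := by positivity
    refine h1.trans_le ?_
    have := Real.log_le_log (by positivity) (hA n)
    rw [Real.log_mul hA0.ne' (exp_pos _).ne', Real.log_exp] at this
    rw [le_div_iff₀ hp, add_mul, div_mul_cancel₀ _ hp.ne']
    exact this
  · intro d hd
    obtain ⟨c, hc1, hc2⟩ := exists_between hd
    have hc0 : 0 < c := lt_trans (by positivity) hc1
    obtain ⟨A, hA0, hA⟩ := aux_upper ℓ hℓ b hb hsum K x c hx hc0 hF (by
      rw [← hα, ← hrl]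
      apply pow_lt_pow_left₀ _ (by positivity) (by omega)
      rw [inv_mul_eq_div, div_lt_iff₀ hα0] at hc1; exact hc1) h hpos hrec
    filter_upwards [(hconst A c).eventually_lt_const hc2,
      eventually_gt_atTop 0] with n h1 hn
    have hn' : (0:ℝ) < n := by exact_mod_cast hn
    have hp : 0 < (n:ℝ) ^ α := by positivity
    refine lt_of_le_of_lt ?_ h1
    have := Real.log_le_log (hpos n) (hA n)
    rw [Real.log_mul hA0.ne' (exp_pos _).ne', Real.log_exp] at this
    rw [div_le_iff₀ hp, add_mul, div_mul_cancel₀ _ hp.ne']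
    exact this

/-- subgradients converge to the derivative -/
lemma aux_slope (f : ℕ → ℝ → ℝ) (φ : ℝ → ℝ) (M : ℕ → ℝ) (s₀ D : ℝ)
    (hf : ∀ s, Tendsto (fun n => f n s) atTop (𝓝 (φ s))) (hφ : HasDerivAt φ D s₀)
    (hM : ∀ᶠ n in atTop, ∀ s, (s - s₀) * M n ≤ f n s - f n s₀) :
    Tendsto M atTop (𝓝 D) := by
  have hs := hasDerivAt_iff_tendsto_slope.1 hφ
  rw [tendsto_order]
  constructor
  · intro d hd
    have h1 : ∀ᶠ s in 𝓝[<] s₀, d < slope φ s₀ s :=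
      (hs.mono_left (nhdsWithin_mono _ fun y hy => ne_of_lt hy)).eventually_const_lt hd
    obtain ⟨s, h2, h3⟩ := (h1.and self_mem_nhdsWithin).exists
    have h3 : s < s₀ := h3
    rw [slope_def_field] at h2
    have h4 := ((hf s).sub (hf s₀)).div_const (s - s₀)
    filter_upwards [h4.eventually_const_lt h2, hM] with n h5 h6
    refine h5.trans_le ?_
    rw [div_le_iff_of_neg (by linarith)]
    have := h6 s
    linarith
  · intro d hd
    have h1 : ∀ᶠ s in 𝓝[>] s₀, slope φ s₀ s < d :=
      (hs.mono_left (nhdsWithin_mono _ fun y hy => ne_of_gt hy)).eventually_lt_const hd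
    obtain ⟨s, h2, h3⟩ := (h1.and self_mem_nhdsWithin).exists
    have h3 : s₀ < s := h3
    rw [slope_def_field] at h2
    have h4 := ((hf s).sub (hf s₀)).div_const (s - s₀)
    filter_upwards [h4.eventually_lt_const h2, hM] with n h5 h6
    refine lt_of_le_of_lt ?_ h5
    rw [le_div_iff₀ (by linarith)]
    have := h6 s
    linarith

/-- Jensen for finite exponential sums -/
lemma aux_jensen (N : ℕ) (w : ℕ → ℝ) (hw : ∀ k, 0 ≤ w k) (x : ℝ) (hx : 0 < x)
    (hp : ∀ y : ℝ, 0 < y → 0 < ∑ k ∈ Finset.range N, w k * y ^ k) (s : ℝ) :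
    (s - log x) * ((∑ k ∈ Finset.range N, (k:ℝ) * w k * x ^ k) / ∑ k ∈ Finset.range N, w k * x ^ k)
      ≤ log (∑ k ∈ Finset.range N, w k * (exp s) ^ k) - log (∑ k ∈ Finset.range N, w k * x ^ k) := by
  set P := ∑ k ∈ Finset.range N, w k * x ^ k with hP
  have hP0 : 0 < P := hp x hx
  set M := (∑ k ∈ Finset.range N, (k:ℝ) * w k * x ^ k) / P with hM
  rw [← Real.log_div (hp _ (exp_pos s)).ne' hP0.ne', Real.le_log_iff_exp_le (div_pos (hp _ (exp_pos s)) hP0),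
    le_div_iff₀ hP0]
  set u := s - log x with hu
  have hes : exp s = x * exp u := by rw [hu, Real.exp_sub, Real.exp_log hx]; field_simp
  have hMP : ∑ k ∈ Finset.range N, (k:ℝ) * w k * x ^ k = M * P := by rw [hM]; field_simp
  calc exp (u * M) * P = exp (u * M) * (P + u * (M * P) - u * M * P) := by ring
    _ = ∑ k ∈ Finset.range N, w k * x ^ k * (exp (u * M) * (1 + (u * k - u * M))) := by
        rw [← hMP, hP, Finset.mul_sum, Finset.mul_sum, ← Finset.sum_add_distrib,
          ← Finset.sum_sub_distrib, Finset.mul_sum]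
        exact Finset.sum_congr rfl fun k _ => by ring
    _ ≤ ∑ k ∈ Finset.range N, w k * (exp s) ^ k := by
        apply Finset.sum_le_sum
        intro k _
        rw [hes, mul_pow, ← mul_assoc (w k) (x ^ k) (exp u ^ k), ← Real.exp_nat_mul]
        apply mul_le_mul_of_nonneg_left _ (mul_nonneg (hw k) (by positivity))
        calc exp (u * M) * (1 + (u * k - u * M)) ≤ exp (u * M) * exp (u * k - u * M) := by
              gcongr
              linarith [Real.add_one_le_exp (u * k - u * M)]
          _ = _ := by rw [← Real.exp_add]; congr 1; ring

noncomputable def powA (k : ℕ) : ArithmeticFunction ℝ := ⟨fun n => if n = 0 then 0 else (n:ℝ) ^ k, by simp⟩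

lemma powA_apply (k n : ℕ) : powA k n = if n = 0 then 0 else (n:ℝ) ^ k := rfl

noncomputable def sA : ℕ → ArithmeticFunction ℝ
  | 0 => 1
  | (ℓ + 1) => powA 0 * ArithmeticFunction.pmul (powA 1) (sA ℓ)

lemma pmul_id_mul (f g : ArithmeticFunction ℝ) :
    ArithmeticFunction.pmul (powA 1) (f * g) =
      ArithmeticFunction.pmul (powA 1) f * ArithmeticFunction.pmul (powA 1) g := by
  ext n
  simp only [ArithmeticFunction.pmul_apply, ArithmeticFunction.mul_apply, Finset.mul_sum]
  apply Finset.sum_congr rfl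
  intro p hp
  rw [Nat.mem_divisorsAntidiagonal] at hp
  obtain ⟨h1, h2⟩ := hp
  have h3 : p.1 ≠ 0 := by rintro h; simp [h] at h1; omega
  have h4 : p.2 ≠ 0 := by rintro h; simp [h] at h1; omega
  simp only [powA_apply, h2, h3, h4, if_false, pow_one]
  rw [← h1, Nat.cast_mul]
  ring

lemma pmul_powA (k : ℕ) : ArithmeticFunction.pmul (powA 1) (powA k) = powA (k + 1) := by
  ext n
  simp only [ArithmeticFunction.pmul_apply, powA_apply]
  split_ifs <;> ring

lemma pmul_powA_one : ArithmeticFunction.pmul (powA 1) 1 = (1 : ArithmeticFunction ℝ) := by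
  ext n
  simp only [ArithmeticFunction.pmul_apply, powA_apply, ArithmeticFunction.one_apply]
  split_ifs with h1 h2 h3 <;> simp_all

lemma sA_succ (ℓ : ℕ) : sA (ℓ + 1) = powA ℓ * sA ℓ := by
  induction ℓ with
  | zero => simp only [sA, pmul_powA_one]
  | succ ℓ ih =>
    rw [sA]
    nth_rewrite 1 [ih]
    rw [pmul_id_mul, pmul_powA, sA]; ring

lemma sA_nonneg (ℓ m : ℕ) : 0 ≤ sA ℓ m := by
  induction ℓ generalizing m with
  | zero => simp only [sA, ArithmeticFunction.one_apply]; split_ifs <;> norm_num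
  | succ ℓ ih =>
    rw [sA_succ, ArithmeticFunction.mul_apply]
    apply Finset.sum_nonneg
    intro p _
    apply mul_nonneg _ (ih _)
    rw [powA_apply]; split_ifs <;> positivity

lemma hasSum_dirichlet (f : ℕ × ℕ → ℝ) (s : ℝ) (hf : HasSum f s)
    (h0 : ∀ p, p.1 * p.2 = 0 → f p = 0) :
    HasSum (fun m => ∑ p ∈ Nat.divisorsAntidiagonal m, f p) s := by
  have h1 := (Equiv.sigmaFiberEquiv (fun p : ℕ × ℕ => p.1 * p.2)).hasSum_iff.2 hf
  refine h1.sigma ?_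
  intro m
  rcases Nat.eq_zero_or_pos m with rfl | hm
  · simp only [Nat.divisorsAntidiagonal_zero, Finset.sum_empty]
    convert hasSum_zero with p
    exact h0 _ p.2
  · have h2 : HasSum (fun p : ((Nat.divisorsAntidiagonal m : Finset (ℕ × ℕ)) : Set (ℕ × ℕ)) => f p)
      (∑ p ∈ Nat.divisorsAntidiagonal m, f p) := Finset.hasSum _ f
    let e : {p : ℕ × ℕ // p.1 * p.2 = m} ≃ ((Nat.divisorsAntidiagonal m : Finset (ℕ × ℕ)) : Set (ℕ × ℕ)) :=
      Equiv.subtypeEquivRight (fun p => by simp [hm.ne'])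
    exact e.hasSum_iff.2 h2

lemma hasSum_zetaR (k : ℕ) (hk : 2 ≤ k) : HasSum (fun n : ℕ => if n = 0 then 0 else 1 / (n:ℝ) ^ k) (zetaR k) := by
  have h1 : Summable (fun n : ℕ => if n = 0 then 0 else 1 / (n:ℝ) ^ k) := by
    have := Real.summable_one_div_nat_pow.2 (show 1 < k by omega)
    refine this.congr_cofinite ?_ |>.congr (fun _ => rfl)
    refine eventually_cofinite.2 ((Set.finite_singleton 0).subset ?_)
    intro n hn
    by_contra h
    apply hn
    simp at h
    simp [h]
  convert h1.hasSum using 1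
  rw [h1.tsum_eq_zero_add, zetaR]
  simp

lemma zetaR_pos (k : ℕ) (hk : 2 ≤ k) : 0 < zetaR k := by
  have h := hasSum_zetaR k hk
  have := h.summable.tsum_pos (fun n => by split_ifs <;> positivity) 1 (by simp)
  rwa [h.tsum_eq] at this

lemma hasSum_sA (ℓ s : ℕ) (hs : ℓ + 1 ≤ s) :
    HasSum (fun m : ℕ => sA ℓ m / (m:ℝ) ^ s) (∏ i ∈ Finset.range ℓ, zetaR ((s - i : ℕ) : ℝ)) := by
  induction ℓ with
  | zero =>
    have : HasSum (fun m : ℕ => sA 0 m / (m:ℝ) ^ s) (sA 0 1 / ((1:ℕ):ℝ) ^ s) := by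
      apply hasSum_single
      intro m hm
      simp [sA, ArithmeticFunction.one_apply, hm]
    simpa [sA] using this
  | succ ℓ ih =>
    have ih := ih (by omega)
    have hz := hasSum_zetaR (s - ℓ) (by omega)
    have hp := hz.mul ih (hz.summable.mul_of_nonneg ih.summable
      (fun n => by simp only [Pi.zero_apply]; split_ifs <;> positivity)
      (fun m => div_nonneg (sA_nonneg _ _) (by positivity)))
    have := hasSum_dirichlet _ _ hp (by
      rintro ⟨d, e⟩ h
      rcases Nat.mul_eq_zero.1 h with h | h <;> simp only at h <;> subst h <;> simp)
    rw [Finset.prod_range_succ, mul_comm]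
    refine this.congr_fun ?_
    intro m
    rw [sA_succ, ArithmeticFunction.mul_apply, Finset.sum_div]
    apply Finset.sum_congr rfl
    intro p hp
    rw [Nat.mem_divisorsAntidiagonal] at hp
    obtain ⟨h1, h2⟩ := hp
    have h3 : p.1 ≠ 0 := by rintro h; simp [h] at h1; omega
    have h4 : p.2 ≠ 0 := by rintro h; simp [h] at h1; omega
    simp only [powA_apply, h3, if_false, ← h1, Nat.cast_mul]
    have : (p.1:ℝ) ^ s = (p.1:ℝ) ^ (s - ℓ) * (p.1:ℝ) ^ ℓ := by
      rw [← pow_add]; congr 1; omega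
    have h3' : (p.1:ℝ) ≠ 0 := by exact_mod_cast h3
    have h4' : (p.2:ℝ) ≠ 0 := by exact_mod_cast h4
    rw [mul_pow, this]
    field_simp

/-- G_k(s) = Σ_{d ≥ 1} d^k e^{-ds} -/
noncomputable def Gk (k : ℕ) (s : ℝ) : ℝ := ∑' d : ℕ, powA k d * exp (-(d * s))

lemma powA_nonneg (k d : ℕ) : 0 ≤ powA k d := by rw [powA_apply]; split_ifs <;> positivity

lemma exp_lt_one_aux {x : ℝ} (h : x < 0) : exp x < 1 := by simpa using h

lemma exp_nat_neg (d : ℕ) (s : ℝ) : exp (-(d * s)) = exp (-s) ^ d := by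
  rw [← Real.exp_nat_mul]; congr 1; ring

lemma Gk_upper (k : ℕ) (s : ℝ) (hs : 0 < s) :
    Summable (fun d : ℕ => powA k d * exp (-(d * s))) ∧
      Gk k s ≤ k.factorial * exp (-s) / (1 - exp (-s)) ^ (k + 1) := by
  have hq : ‖exp (-s)‖ < 1 := by
    rw [Real.norm_of_nonneg (exp_pos _).le]; exact exp_lt_one_aux (by linarith)
  have h1 := (hasSum_choose_mul_geometric_of_norm_lt_one k hq).mul_left (k.factorial * exp (-s))
  have hle : ∀ d : ℕ, powA k (d + 1) * exp (-(((d + 1 : ℕ) : ℝ) * s)) ≤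
      k.factorial * exp (-s) * (((d + k).choose k : ℕ) * exp (-s) ^ d) := by
    intro d
    rw [exp_nat_neg, powA_apply, if_neg (by omega)]
    have : (d + 1) ^ k ≤ k.factorial * (d + k).choose k := by
      rw [← Nat.ascFactorial_eq_factorial_mul_choose]
      exact Nat.pow_succ_le_ascFactorial _ _
    have : (((d + 1 : ℕ):ℝ)) ^ k ≤ k.factorial * (d + k).choose k := by exact_mod_cast this
    calc _ ≤ ((k.factorial * (d + k).choose k : ℝ)) * exp (-s) ^ (d + 1) := by gcongr
      _ = _ := by rw [pow_succ]; ring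
  have hnn : ∀ d : ℕ, 0 ≤ powA k (d + 1) * exp (-(((d + 1 : ℕ) : ℝ) * s)) := fun d =>
    mul_nonneg (powA_nonneg _ _) (exp_pos _).le
  have hs1 := Summable.of_nonneg_of_le hnn hle h1.summable
  have hs0 : Summable (fun d : ℕ => powA k d * exp (-(d * s))) :=
    (summable_nat_add_iff 1).1 hs1
  refine ⟨hs0, ?_⟩
  rw [Gk, hs0.tsum_eq_zero_add]
  have := hs1.tsum_le_tsum hle h1.summable
  rw [h1.tsum_eq] at this
  simp only [powA_apply k 0, if_true, zero_mul, zero_add]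
  refine this.trans (le_of_eq (by ring))

lemma Gk_lower (k : ℕ) (s : ℝ) (hs : 0 < s) :
    k.factorial * exp (-s) ^ (k + 1) / (1 - exp (-s)) ^ (k + 1) ≤ Gk k s := by
  have hq : ‖exp (-s)‖ < 1 := by
    rw [Real.norm_of_nonneg (exp_pos _).le]; exact exp_lt_one_aux (by linarith)
  have h1 := (hasSum_choose_mul_geometric_of_norm_lt_one k hq).mul_left (k.factorial * exp (-s) ^ (k + 1))
  have hs0 := (Gk_upper k s hs).1
  have hs1 := (summable_nat_add_iff (k + 1)).2 hs0
  have hle : ∀ d : ℕ, k.factorial * exp (-s) ^ (k + 1) * (((d + k).choose k : ℕ) * exp (-s) ^ d) ≤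
      powA k (d + (k + 1)) * exp (-(((d + (k + 1) : ℕ) : ℝ) * s)) := by
    intro d
    rw [exp_nat_neg, powA_apply, if_neg (by omega)]
    have : k.factorial * (d + k).choose k ≤ (d + (k + 1)) ^ k := by
      rw [← Nat.descFactorial_eq_factorial_mul_choose]
      exact (Nat.descFactorial_le_pow _ _).trans (Nat.pow_le_pow_left (by omega) _)
    have : (k.factorial * (d + k).choose k : ℝ) ≤ (((d + (k + 1) : ℕ):ℝ)) ^ k := by exact_mod_cast this
    calc _ = ((k.factorial * (d + k).choose k : ℝ)) * exp (-s) ^ (d + (k + 1)) := by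
            rw [pow_add (exp (-s)) d]; ring
      _ ≤ _ := by gcongr
  have := h1.summable.tsum_le_tsum hle hs1
  rw [h1.tsum_eq] at this
  have h2 := hs0.sum_add_tsum_nat_add (k + 1)
  have h3 : 0 ≤ ∑ i ∈ Finset.range (k + 1), powA k i * exp (-(i * s)) :=
    Finset.sum_nonneg fun i _ => mul_nonneg (powA_nonneg _ _) (exp_pos _).le
  rw [Gk, ← h2]
  refine le_trans (le_of_eq (by ring)) (this.trans (by linarith))

lemma lim_q : Tendsto (fun s : ℝ => s / (1 - exp (-s))) (𝓝[>] 0) (𝓝 1) := by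
  have h : HasDerivAt (fun s : ℝ => 1 - exp (-s)) 1 0 := by
    have := ((hasDerivAt_neg (0:ℝ)).exp).const_sub 1
    simpa using this
  have h2 := (hasDerivAt_iff_tendsto_slope.1 h).mono_left (nhdsWithin_mono _ fun y (hy : 0 < y) => (ne_of_gt hy : y ≠ 0))
  have h3 := h2.inv₀ one_ne_zero
  rw [inv_one] at h3
  refine h3.congr ?_
  intro s
  simp [slope_def_field]

lemma Gk_lim (k : ℕ) : Tendsto (fun s : ℝ => s ^ (k + 1) * Gk k s) (𝓝[>] 0) (𝓝 k.factorial) := by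
  have he : Tendsto (fun s : ℝ => exp (-s)) (𝓝[>] 0) (𝓝 1) := by
    have : Continuous (fun s : ℝ => exp (-s)) := by fun_prop
    simpa using (this.tendsto 0).mono_left nhdsWithin_le_nhds
  have hq := lim_q.pow (k + 1)
  have hlo := (hq.mul (he.pow (k + 1))).const_mul (k.factorial : ℝ)
  have hup := (hq.mul he).const_mul (k.factorial : ℝ)
  simp only [one_pow, mul_one] at hlo hup
  refine tendsto_of_tendsto_of_tendsto_of_le_of_le' hlo hup ?_ ?_
  · filter_upwards [self_mem_nhdsWithin] with s hs
    have hs : 0 < s := hs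
    calc _ = s ^ (k + 1) * (k.factorial * exp (-s) ^ (k + 1) / (1 - exp (-s)) ^ (k + 1)) := by
          rw [div_pow]; ring
      _ ≤ _ := by gcongr; exact Gk_lower k s hs
  · filter_upwards [self_mem_nhdsWithin] with s hs
    have hs : 0 < s := hs
    calc _ ≤ s ^ (k + 1) * (k.factorial * exp (-s) / (1 - exp (-s)) ^ (k + 1)) := by
          gcongr; exact (Gk_upper k s hs).2
      _ = _ := by rw [div_pow]; ring

lemma Gk_nonneg (k : ℕ) (s : ℝ) : 0 ≤ Gk k s :=
  tsum_nonneg fun d => mul_nonneg (powA_nonneg _ _) (exp_pos _).le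

lemma Gk_bound (k : ℕ) : ∃ C : ℝ, ∀ s : ℝ, 0 < s → s ^ (k + 1) * Gk k s ≤ C := by
  refine ⟨k.factorial * ((k + 1).factorial * exp 1), ?_⟩
  intro s hs
  have h1 : s / (1 - exp (-s)) ≤ 1 + s := by
    have hlt : exp (-s) < 1 := exp_lt_one_aux (by linarith)
    rw [div_le_iff₀ (by linarith)]
    have : (1 + s) * exp (-s) ≤ 1 := by
      rw [Real.exp_neg, ← div_eq_mul_inv, div_le_one (exp_pos _)]
      linarith [Real.add_one_le_exp s]
    nlinarith
  have h0 : 0 ≤ s / (1 - exp (-s)) := by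
    have hlt : exp (-s) < 1 := exp_lt_one_aux (by linarith)
    exact div_nonneg hs.le (by linarith)
  calc _ ≤ s ^ (k + 1) * (k.factorial * exp (-s) / (1 - exp (-s)) ^ (k + 1)) := by
        gcongr; exact (Gk_upper k s hs).2
    _ = k.factorial * ((s / (1 - exp (-s))) ^ (k + 1) * exp (-s)) := by rw [div_pow]; ring
    _ ≤ k.factorial * ((1 + s) ^ (k + 1) * exp (-s)) := by gcongr
    _ ≤ k.factorial * (((k + 1).factorial * exp (1 + s)) * exp (-s)) := by
        gcongr
        have := Real.pow_div_factorial_le_exp (1 + s) (by linarith) (k + 1)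
        rwa [div_le_iff₀ (by positivity), mul_comm] at this
    _ = _ := by
        rw [mul_assoc ((k+1).factorial : ℝ), ← Real.exp_add]; congr 3; ring

lemma Kconst_eq (k : ℕ) : Kconst (k + 1) = k.factorial * ∏ i ∈ Finset.range k, zetaR ((k + 1 - i : ℕ) : ℝ) := by
  rw [Kconst, Nat.add_sub_cancel]
  congr 1
  symm
  apply Finset.prod_bij (fun i _ => k + 1 - i)
  · intro i hi; simp at hi ⊢; omega
  · intro i hi j hj h; simp at hi hj; omega
  · intro j hj; simp at hj; exact ⟨k + 1 - j, by simp; omega, by omega⟩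
  · intro i hi; rfl

lemma Kconst_pos (ℓ : ℕ) : 0 < Kconst ℓ := by
  rw [Kconst]
  refine mul_pos (by positivity) (Finset.prod_pos fun j hj => ?_)
  rw [Finset.mem_Icc] at hj
  exact zetaR_pos j hj.1

lemma sA_F (k : ℕ) (t : ℝ) (ht : 0 < t) :
    HasSum (fun m : ℕ => sA (k + 1) m * exp (-(m * t))) (∑' e : ℕ, sA k e * Gk k (e * t)) := by
  obtain ⟨C, hC⟩ := Gk_bound k
  have hD := hasSum_sA k (k + 1) le_rfl
  have hG : ∀ e : ℕ, HasSum (fun d : ℕ => sA k e * (powA k d * exp (-(d * (e * t))))) (sA k e * Gk k (e * t)) := by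
    intro e
    rcases Nat.eq_zero_or_pos e with rfl | he
    · simpa using hasSum_zero
    · have he' : (0:ℝ) < e := by exact_mod_cast he
      exact ((Gk_upper k (e * t) (by positivity)).1.hasSum).mul_left _
  have hS : Summable (fun e : ℕ => sA k e * Gk k (e * t)) := by
    refine Summable.of_nonneg_of_le (fun e => mul_nonneg (sA_nonneg _ _) (Gk_nonneg _ _)) ?_
      (hD.summable.mul_left (C / t ^ (k + 1)))
    intro e
    rcases Nat.eq_zero_or_pos e with rfl | he
    · simp
    · have he' : (0:ℝ) < e := by exact_mod_cast he
      have := hC (e * t) (by positivity)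
      have h2 : Gk k (e * t) ≤ C / (e * t) ^ (k + 1) := by
        rw [le_div_iff₀ (by positivity)]; linarith
      calc _ ≤ sA k e * (C / (e * t) ^ (k + 1)) := mul_le_mul_of_nonneg_left h2 (sA_nonneg _ _)
        _ = _ := by rw [mul_pow]; field_simp
  have hprod : Summable (fun p : ℕ × ℕ => sA k p.1 * (powA k p.2 * exp (-(p.2 * (p.1 * t))))) := by
    rw [summable_prod_of_nonneg (fun p => mul_nonneg (sA_nonneg _ _) (mul_nonneg (powA_nonneg _ _) (exp_pos _).le))]
    exact ⟨fun e => (hG e).summable, hS.congr fun e => ((hG e).tsum_eq).symm⟩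
  have hsum := hprod.hasSum
  rw [hprod.tsum_prod' (fun e => (hG e).summable)] at hsum
  simp only [(hG _).tsum_eq] at hsum
  have := hasSum_dirichlet _ _ hsum (by
      rintro ⟨d, e⟩ h
      rcases Nat.mul_eq_zero.1 h with h | h <;> simp only at h <;> subst h <;> simp)
  refine this.congr_fun ?_
  intro m
  rw [sA_succ, mul_comm (powA k), ArithmeticFunction.mul_apply, Finset.sum_mul]
  apply Finset.sum_congr rfl
  intro p hp
  rw [Nat.mem_divisorsAntidiagonal] at hp
  rw [← hp.1, mul_assoc]
  congr 4
  push_cast; ring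

lemma sA_lim (k : ℕ) : Tendsto (fun t : ℝ => t ^ (k + 1) * ∑' m : ℕ, sA (k + 1) m * exp (-(m * t)))
    (𝓝[>] 0) (𝓝 (Kconst (k + 1))) := by
  obtain ⟨C, hC⟩ := Gk_bound k
  have hD := hasSum_sA k (k + 1) le_rfl
  have hmain : Tendsto (fun t : ℝ => ∑' e : ℕ, t ^ (k + 1) * (sA k e * Gk k (e * t))) (𝓝[>] 0)
      (𝓝 (∑' e : ℕ, k.factorial * (sA k e / (e:ℝ) ^ (k + 1)))) := by
    have hre : ∀ (e : ℕ) (t : ℝ), t ^ (k + 1) * (sA k e * Gk k (e * t)) =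
        (sA k e / (e:ℝ) ^ (k + 1)) * ((e * t) ^ (k + 1) * Gk k (e * t)) := by
      intro e t
      rcases Nat.eq_zero_or_pos e with rfl | he
      · simp
      · have he' : (0:ℝ) < e := by exact_mod_cast he
        rw [mul_pow]; field_simp
    apply tendsto_tsum_of_dominated_convergence (bound := fun e : ℕ => C * (sA k e / (e:ℝ) ^ (k + 1)))
      (hD.summable.mul_left C)
    · intro e
      rcases Nat.eq_zero_or_pos e with rfl | he
      · simp
      · have he' : (0:ℝ) < e := by exact_mod_cast he
        simp only [hre]
        rw [mul_comm (k.factorial : ℝ)]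
        apply Tendsto.const_mul
        apply (Gk_lim k).comp
        rw [tendsto_nhdsWithin_iff]
        constructor
        · have : Continuous (fun t : ℝ => (e:ℝ) * t) := by fun_prop
          simpa using (this.tendsto 0).mono_left nhdsWithin_le_nhds
        · filter_upwards [self_mem_nhdsWithin] with t ht
          have : 0 < t := ht
          simp only [Set.mem_Ioi]; positivity
    · filter_upwards [self_mem_nhdsWithin] with t ht e
      have ht : 0 < t := ht
      rw [hre]
      rcases Nat.eq_zero_or_pos e with rfl | he
      · simp
      · have he' : (0:ℝ) < e := by exact_mod_cast he
        have h1 : 0 ≤ sA k e / (e:ℝ) ^ (k + 1) := div_nonneg (sA_nonneg _ _) (by positivity)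
        rw [Real.norm_of_nonneg (mul_nonneg h1 (mul_nonneg (by positivity) (Gk_nonneg _ _))), mul_comm]
        exact mul_le_mul_of_nonneg_right (hC _ (by positivity)) h1
  rw [tsum_mul_left, hD.tsum_eq, ← Kconst_eq] at hmain
  refine hmain.congr' ?_
  filter_upwards [self_mem_nhdsWithin] with t ht
  rw [(sA_F k t ht).tsum_eq, tsum_mul_left]

lemma index_prod_aux {A : Type*} [AddCommGroup A] (L : AddSubgroup (ℤ × A)) :
    L.index = (L.map (AddMonoidHom.fst ℤ A)).index * (L.comap (AddMonoidHom.inr ℤ A)).index := by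
  have hker : (AddMonoidHom.fst ℤ A).ker = (AddMonoidHom.inr ℤ A).range := by
    ext ⟨z, a⟩
    simp only [AddMonoidHom.mem_ker, AddMonoidHom.coe_fst, AddMonoidHom.mem_range, AddMonoidHom.inr_apply,
      Prod.mk.injEq]
    constructor
    · rintro rfl; exact ⟨a, rfl, rfl⟩
    · rintro ⟨_, h, _⟩; exact h.symm
  have hr : (AddMonoidHom.fst ℤ A).range = ⊤ :=
    AddMonoidHom.range_eq_top_of_surjective _ Prod.fst_surjective
  rw [AddSubgroup.index_map, hr, AddSubgroup.index_top, mul_one, AddSubgroup.index_comap, ← hker,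
    ← AddSubgroup.relIndex_sup_left, mul_comm, AddSubgroup.relIndex_mul_index le_sup_left]

lemma index_zmul (d : ℕ) : (AddSubgroup.zmultiples (d:ℤ)).index = d := by
  rw [AddSubgroup.index, Nat.card_congr (Int.quotientZMultiplesNatEquivZMod d).toEquiv, Nat.card_zmod]

lemma eq_zmul_index (D : AddSubgroup ℤ) : D = AddSubgroup.zmultiples (D.index : ℤ) := by
  obtain ⟨a, ha⟩ := Int.subgroup_cyclic D
  rw [← AddSubgroup.zmultiples_eq_closure, ← Int.zmultiples_natAbs] at ha
  have := index_zmul a.natAbs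
  rw [← ha] at this
  rw [this]; exact ha

/-- The subgroup of `ℤ × A` attached to `(d, B, c)`. -/
def subL {A : Type*} [AddCommGroup A] (d : ℕ) (B : AddSubgroup A) (c : A ⧸ B) :
    AddSubgroup (ℤ × A) where
  carrier := {p | ∃ k : ℤ, p.1 = k * d ∧ (QuotientAddGroup.mk p.2 : A ⧸ B) = k • c}
  zero_mem' := ⟨0, by simp⟩
  add_mem' := by
    rintro ⟨z, a⟩ ⟨z', a'⟩ ⟨k, h1, h2⟩ ⟨k', h1', h2'⟩
    refine ⟨k + k', ?_, ?_⟩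
    · simp only [Prod.fst_add] at *; rw [h1, h1']; ring
    · simp only [Prod.snd_add] at *; rw [QuotientAddGroup.mk_add, h2, h2', add_smul]
  neg_mem' := by
    rintro ⟨z, a⟩ ⟨k, h1, h2⟩
    refine ⟨-k, ?_, ?_⟩
    · simp only [Prod.fst_neg] at *; rw [h1]; ring
    · simp only [Prod.snd_neg] at *; rw [QuotientAddGroup.mk_neg, h2, neg_smul]

lemma mem_subL {A : Type*} [AddCommGroup A] (d : ℕ) (B : AddSubgroup A) (c : A ⧸ B) (p : ℤ × A) :
    p ∈ subL d B c ↔ ∃ k : ℤ, p.1 = k * d ∧ (QuotientAddGroup.mk p.2 : A ⧸ B) = k • c := Iff.rfl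

lemma subL_map {A : Type*} [AddCommGroup A] (d : ℕ) (B : AddSubgroup A) (c : A ⧸ B) :
    (subL d B c).map (AddMonoidHom.fst ℤ A) = AddSubgroup.zmultiples (d:ℤ) := by
  ext z
  rw [AddSubgroup.mem_map, AddSubgroup.mem_zmultiples_iff]
  constructor
  · rintro ⟨p, ⟨k, h1, _⟩, rfl⟩
    exact ⟨k, by simp [h1]⟩
  · rintro ⟨k, rfl⟩
    obtain ⟨a, ha⟩ := QuotientAddGroup.mk_surjective (k • c)
    exact ⟨(k • (d:ℤ), a), ⟨k, by simp, ha⟩, rfl⟩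

lemma subL_comap {A : Type*} [AddCommGroup A] (d : ℕ) (hd : d ≠ 0) (B : AddSubgroup A) (c : A ⧸ B) :
    (subL d B c).comap (AddMonoidHom.inr ℤ A) = B := by
  ext a
  rw [AddSubgroup.mem_comap, mem_subL]
  constructor
  · rintro ⟨k, h1, h2⟩
    have hk : k = 0 := by
      simp at h1
      rcases h1 with h | h
      · exact h
      · exact absurd h hd
    rw [hk, zero_smul] at h2
    exact (QuotientAddGroup.eq_zero_iff a).1 h2
  · intro h
    exact ⟨0, by simp, by simpa using (QuotientAddGroup.eq_zero_iff a).2 h⟩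

lemma subL_index {A : Type*} [AddCommGroup A] (d : ℕ) (hd : d ≠ 0) (B : AddSubgroup A) (c : A ⧸ B) :
    (subL d B c).index = d * B.index := by
  rw [index_prod_aux, subL_map, subL_comap d hd, index_zmul]

lemma subL_inj {A : Type*} [AddCommGroup A] (d : ℕ) (hd : d ≠ 0) (B : AddSubgroup A) (c c' : A ⧸ B)
    (h : subL d B c = subL d B c') : c = c' := by
  obtain ⟨a, ha⟩ := QuotientAddGroup.mk_surjective c
  have h1 : ((d:ℤ), a) ∈ subL d B c := ⟨1, by simp, by simpa using ha⟩
  rw [h] at h1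
  obtain ⟨k, h2, h3⟩ := h1
  have hk : k = 1 := by
    have hd' : (d:ℤ) ≠ 0 := by exact_mod_cast hd
    simp only at h2
    exact (mul_right_cancel₀ hd' (by linarith))
  simp only at h3
  rw [hk, one_smul, ha] at h3
  exact h3

lemma subL_surj {A : Type*} [AddCommGroup A] (L : AddSubgroup (ℤ × A)) :
    ∃ c : A ⧸ (L.comap (AddMonoidHom.inr ℤ A)),
      subL (L.map (AddMonoidHom.fst ℤ A)).index (L.comap (AddMonoidHom.inr ℤ A)) c = L := by
  set d := (L.map (AddMonoidHom.fst ℤ A)).index with hd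
  have hD : L.map (AddMonoidHom.fst ℤ A) = AddSubgroup.zmultiples (d:ℤ) := eq_zmul_index _
  have h1 : (d:ℤ) ∈ L.map (AddMonoidHom.fst ℤ A) := by rw [hD]; exact AddSubgroup.mem_zmultiples _
  obtain ⟨⟨z, a⟩, h2, h3⟩ := h1
  have h3 : z = d := h3
  subst h3
  refine ⟨QuotientAddGroup.mk a, ?_⟩
  ext ⟨z, a'⟩
  rw [mem_subL]
  have key : ∀ k : ℤ, ((QuotientAddGroup.mk a' : A ⧸ (L.comap (AddMonoidHom.inr ℤ A))) =
      k • (QuotientAddGroup.mk a : A ⧸ (L.comap (AddMonoidHom.inr ℤ A)))) ↔ ((k * d : ℤ), a') ∈ L := by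
    intro k
    rw [← QuotientAddGroup.mk_zsmul, eq_comm, QuotientAddGroup.eq, AddSubgroup.mem_comap]
    have e : ((k * d : ℤ), a') = k • ((d:ℤ), a) + (AddMonoidHom.inr ℤ A) (-(k • a) + a') := by
      ext <;> simp
    rw [e]
    exact ((L.add_mem_cancel_left (L.zsmul_mem h2 k))).symm
  constructor
  · rintro ⟨k, h4, h5⟩
    simp only at h4 h5
    rw [h4]
    exact (key k).1 h5
  · intro h4
    have h5 : z ∈ L.map (AddMonoidHom.fst ℤ A) := ⟨(z, a'), h4, rfl⟩
    rw [hD, AddSubgroup.mem_zmultiples_iff] at h5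
    obtain ⟨k, rfl⟩ := h5
    refine ⟨k, by simp, (key k).2 (by simpa using h4)⟩

/-- the parametrization -/
def subPar (A : Type*) [AddCommGroup A] (m : ℕ) (hm : m ≠ 0)
    (q : Σ p : Nat.divisorsAntidiagonal m, Σ B : {B : AddSubgroup A // B.index = p.1.2}, A ⧸ B.1) :
    {L : AddSubgroup (ℤ × A) // L.index = m} :=
  ⟨subL q.1.1.1 q.2.1.1 q.2.2, by
    have h := Nat.mem_divisorsAntidiagonal.1 q.1.2
    rw [subL_index _ (by rintro h0; rw [h0] at h; simp at h; omega), q.2.1.2, h.1]⟩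

lemma subPar_bij (A : Type*) [AddCommGroup A] (m : ℕ) (hm : m ≠ 0) :
    Function.Bijective (subPar A m hm) := by
  constructor
  · rintro ⟨⟨⟨d, e⟩, hp⟩, ⟨B, hB⟩, c⟩ ⟨⟨⟨d', e'⟩, hp'⟩, ⟨B', hB'⟩, c'⟩ h
    have h : subL d B c = subL d' B' c' := congrArg Subtype.val h
    have h1 := Nat.mem_divisorsAntidiagonal.1 hp
    have h1' := Nat.mem_divisorsAntidiagonal.1 hp'
    have hd : d ≠ 0 := by rintro h0; rw [h0] at h1; simp at h1; omega
    have hd' : d' ≠ 0 := by rintro h0; rw [h0] at h1'; simp at h1'; omega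
    have e1 : d = d' := by
      have := congrArg (fun L => (L.map (AddMonoidHom.fst ℤ A)).index) h
      simpa only [subL_map, index_zmul] using this
    have e2 : B = B' := by
      have := congrArg (fun L => (L.comap (AddMonoidHom.inr ℤ A))) h
      simpa only [subL_comap d hd, subL_comap d' hd'] using this
    subst e1 e2
    simp only at hB hB'
    subst hB
    subst hB'
    have := subL_inj d hd B c c' h
    subst this
    rfl
  · rintro ⟨L, hL⟩
    obtain ⟨c, hc⟩ := subL_surj L
    refine ⟨⟨⟨((L.map (AddMonoidHom.fst ℤ A)).index, (L.comap (AddMonoidHom.inr ℤ A)).index), ?_⟩,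
      ⟨L.comap (AddMonoidHom.inr ℤ A), rfl⟩, c⟩, ?_⟩
    · rw [Nat.mem_divisorsAntidiagonal]
      exact ⟨by rw [← hL]; exact (index_prod_aux L).symm, hm⟩
    · exact Subtype.ext hc

lemma count_step (A : Type*) [AddCommGroup A]
    (hfin : ∀ m ≠ 0, Finite {B : AddSubgroup A // B.index = m}) (m : ℕ) (hm : m ≠ 0) :
    Finite {L : AddSubgroup (ℤ × A) // L.index = m} ∧
    Nat.card {L : AddSubgroup (ℤ × A) // L.index = m} =
      ∑ p ∈ Nat.divisorsAntidiagonal m, p.2 * Nat.card {B : AddSubgroup A // B.index = p.2} := by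
  have hne : ∀ p : Nat.divisorsAntidiagonal m, p.1.2 ≠ 0 := by
    rintro ⟨⟨d, e⟩, hp⟩ h0
    have h1 := Nat.mem_divisorsAntidiagonal.1 hp
    simp only at h0 h1
    rw [h0] at h1; simp at h1; omega
  have hf1 : ∀ p : Nat.divisorsAntidiagonal m, Finite {B : AddSubgroup A // B.index = p.1.2} :=
    fun p => hfin _ (hne p)
  have hf2 : ∀ (p : Nat.divisorsAntidiagonal m) (B : {B : AddSubgroup A // B.index = p.1.2}),
      Finite (A ⧸ B.1) := by
    intro p B
    apply Nat.finite_of_card_ne_zero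
    have := B.2
    rw [AddSubgroup.index] at this
    rw [this]; exact hne p
  let e := Equiv.ofBijective _ (subPar_bij A m hm)
  refine ⟨Finite.of_equiv _ e, ?_⟩
  rw [← Nat.card_congr e]
  have := fun p => Fintype.ofFinite {B : AddSubgroup A // B.index = (p : Nat.divisorsAntidiagonal m).1.2}
  rw [Nat.card_sigma, ← Finset.sum_coe_sort (Nat.divisorsAntidiagonal m)
    (fun p => p.2 * Nat.card {B : AddSubgroup A // B.index = p.2})]
  apply Finset.sum_congr rfl
  intro p _
  rw [Nat.card_sigma]
  have : ∀ B : {B : AddSubgroup A // B.index = p.1.2}, Nat.card (A ⧸ B.1) = p.1.2 := fun B => B.2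
  simp only [this, Finset.sum_const, Finset.card_univ, smul_eq_mul, Nat.card_eq_fintype_card]
  ring

lemma card_sub_congr {A B : Type*} [AddGroup A] [AddGroup B] (e : A ≃+ B) (m : ℕ) :
    Nonempty ({L : AddSubgroup A // L.index = m} ≃ {L : AddSubgroup B // L.index = m}) := by
  refine ⟨e.mapAddSubgroup.toEquiv.subtypeEquiv ?_⟩
  intro L
  have : (e.mapAddSubgroup.toEquiv L).index = L.index := AddSubgroup.index_map_equiv L e
  rw [this]

def finSuccAdd (ℓ : ℕ) : ℤ × (Fin ℓ → ℤ) ≃+ (Fin (ℓ + 1) → ℤ) where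
  toFun p := Fin.cons p.1 p.2
  invFun f := (f 0, fun i => f i.succ)
  left_inv p := by simp
  right_inv f := by
    funext i
    refine Fin.cases ?_ (fun j => ?_) i <;> simp
  map_add' p q := by
    funext i
    refine Fin.cases ?_ (fun j => ?_) i <;> simp

lemma count_sub (ℓ : ℕ) : ∀ m ≠ 0, Finite {L : AddSubgroup (Fin ℓ → ℤ) // L.index = m} ∧
    (Nat.card {L : AddSubgroup (Fin ℓ → ℤ) // L.index = m} : ℝ) = sA ℓ m := by
  induction ℓ with
  | zero =>
    intro m hm
    have hs : Subsingleton {L : AddSubgroup (Fin 0 → ℤ) // L.index = m} :=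
      ⟨fun L L' => Subtype.ext (by
        ext v
        rw [Subsingleton.elim v 0]
        exact iff_of_true L.1.zero_mem L'.1.zero_mem)⟩
    refine ⟨inferInstance, ?_⟩
    by_cases h1 : m = 1
    · subst h1
      have : Nat.card {L : AddSubgroup (Fin 0 → ℤ) // L.index = 1} = 1 := by
        rw [Nat.card_eq_one_iff_unique]
        exact ⟨hs, ⟨⟨⊤, AddSubgroup.index_top⟩⟩⟩
      rw [this]; simp [sA]
    · have : IsEmpty {L : AddSubgroup (Fin 0 → ℤ) // L.index = m} := by
        refine ⟨fun L => h1 ?_⟩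
        have := L.2
        rw [← this]
        have h2 : L.1 = ⊤ := by
          ext v
          rw [Subsingleton.elim v 0]
          exact iff_of_true L.1.zero_mem trivial
        rw [h2, AddSubgroup.index_top]
      simp [sA, ArithmeticFunction.one_apply, h1]
  | succ ℓ ih =>
    intro m hm
    obtain ⟨e⟩ := card_sub_congr (finSuccAdd ℓ) m
    obtain ⟨h1, h2⟩ := count_step (Fin ℓ → ℤ) (fun m hm => (ih m hm).1) m hm
    refine ⟨Finite.of_equiv _ e, ?_⟩
    rw [← Nat.card_congr e, h2, sA, ArithmeticFunction.mul_apply]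
    push_cast
    apply Finset.sum_congr rfl
    intro p hp
    rw [Nat.mem_divisorsAntidiagonal] at hp
    obtain ⟨h1, h2⟩ := hp
    have h3 : p.1 ≠ 0 := by rintro h; simp [h] at h1; omega
    have h4 : p.2 ≠ 0 := by rintro h; simp [h] at h1; omega
    rw [(ih p.2 h4).2, ArithmeticFunction.pmul_apply, powA_apply, powA_apply, if_neg h3, if_neg h4]
    ring

lemma count_subG (ℓ : ℕ) (m : ℕ) (hm : m ≠ 0) :
    Finite {L : Subgroup (Fin ℓ → Multiplicative ℤ) // L.index = m} ∧
    (Nat.card {L : Subgroup (Fin ℓ → Multiplicative ℤ) // L.index = m} : ℝ) = sA ℓ m := by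
  obtain ⟨h1, h2⟩ := count_sub ℓ m hm
  let e0 : (Fin ℓ → ℤ) ≃+ Additive (Fin ℓ → Multiplicative ℤ) :=
    { toFun := fun f => Additive.ofMul (fun i => Multiplicative.ofAdd (f i))
      invFun := fun f i => (f.toMul i).toAdd
      left_inv := fun f => rfl
      right_inv := fun f => rfl
      map_add' := fun f g => rfl }
  obtain ⟨e⟩ := card_sub_congr e0 m
  let e1 : {L : Subgroup (Fin ℓ → Multiplicative ℤ) // L.index = m} ≃
      {L : AddSubgroup (Additive (Fin ℓ → Multiplicative ℤ)) // L.index = m} :=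
    Subgroup.toAddSubgroup.toEquiv.subtypeEquiv (fun L => by
      have : (Subgroup.toAddSubgroup.toEquiv L).index = L.index := Subgroup.index_toAddSubgroup
      rw [this])
  refine ⟨Finite.of_equiv _ (e.trans e1.symm), ?_⟩
  rw [Nat.card_congr (e1.trans e.symm), h2]

/-- orbits of a permutation representation -/
def orbsets {G X : Type*} [Group G] (α : G →* Equiv.Perm X) : Set (Set X) :=
  Set.range (fun x => Set.range (fun g => α g x))

noncomputable def kap {G X : Type*} [Group G] (α : G →* Equiv.Perm X) : ℕ := (orbsets α).ncard

open Classical in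
noncomputable def glue {G X : Type*} [Group G] (L : Subgroup G) (φ : G ⧸ L ↪ X)
    (β : G →* Equiv.Perm {y // ¬ y ∈ Set.range φ}) : G →* Equiv.Perm X :=
  (Equiv.Perm.subtypeCongrHom (fun y => y ∈ Set.range φ)).comp
    (MonoidHom.prod (((Equiv.ofInjective φ φ.injective).permCongrHom.toMonoidHom).comp
      (MulAction.toPermHom G (G ⧸ L))) β)

open Classical in
lemma glue_in {G X : Type*} [Group G] (L : Subgroup G) (φ : G ⧸ L ↪ X)
    (β : G →* Equiv.Perm {y // ¬ y ∈ Set.range φ}) (g : G) (q : G ⧸ L) :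
    glue L φ β g (φ q) = φ (g • q) := by
  have h : φ q ∈ Set.range φ := ⟨q, rfl⟩
  have e : (Equiv.ofInjective φ φ.injective).symm ⟨φ q, h⟩ = q :=
    (Equiv.ofInjective φ φ.injective).symm_apply_apply q
  simp [glue, Equiv.Perm.subtypeCongrHom, Equiv.Perm.subtypeCongr.left_apply _ _ h, Equiv.permCongrHom, e]

open Classical in
lemma glue_out {G X : Type*} [Group G] (L : Subgroup G) (φ : G ⧸ L ↪ X)
    (β : G →* Equiv.Perm {y // ¬ y ∈ Set.range φ}) (g : G) (y : {y // ¬ y ∈ Set.range φ}) :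
    glue L φ β g y = (β g y : X) := by
  obtain ⟨y, h⟩ := y
  simp only [glue, Equiv.Perm.subtypeCongrHom, MonoidHom.comp_apply, MonoidHom.coe_mk, OneHom.coe_mk,
    MonoidHom.prod_apply]
  rw [Equiv.Perm.subtypeCongr.right_apply _ _ h]

lemma kap_glue {G X : Type*} [Group G] [Finite X] (L : Subgroup G) (φ : G ⧸ L ↪ X)
    (β : G →* Equiv.Perm {y // ¬ y ∈ Set.range φ}) : kap (glue L φ β) = kap β + 1 := by
  have h : orbsets (glue L φ β) =
      insert (Set.range φ) ((fun s => Subtype.val '' s) '' orbsets β) := by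
    have hin : ∀ q, Set.range (fun g => glue L φ β g (φ q)) = Set.range φ := by
      intro q
      simp only [glue_in]
      ext y
      constructor
      · rintro ⟨g, rfl⟩; exact ⟨_, rfl⟩
      · rintro ⟨q', rfl⟩
        obtain ⟨g, hg⟩ := MulAction.exists_smul_eq G q q'
        exact ⟨g, by simp only [hg]⟩
    have hout : ∀ y : {y // ¬ y ∈ Set.range φ}, Set.range (fun g => glue L φ β g y) =
        Subtype.val '' (Set.range (fun g => β g y)) := by
      intro y
      simp only [glue_out]
      rw [← Set.range_comp]; rfl
    ext s
    simp only [orbsets, Set.mem_insert_iff, Set.mem_image, Set.mem_range, exists_exists_eq_and]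
    constructor
    · rintro ⟨y, rfl⟩
      by_cases hy : y ∈ Set.range φ
      · obtain ⟨q, rfl⟩ := hy
        left; exact hin q
      · right
        exact ⟨⟨y, hy⟩, (hout ⟨y, hy⟩).symm⟩
    · rintro (rfl | ⟨y, rfl⟩)
      · exact ⟨φ (QuotientGroup.mk 1), hin _⟩
      · exact ⟨y, hout y⟩
  rw [kap, h, Set.ncard_insert_of_notMem _ (Set.toFinite _), Set.ncard_image_of_injective, kap]
  · exact Set.image_injective.2 Subtype.val_injective
  · rintro ⟨s, _, hs⟩
    have : φ (QuotientGroup.mk 1) ∈ Set.range φ := ⟨_, rfl⟩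
    rw [← hs] at this
    obtain ⟨y, _, hy⟩ := this
    exact y.2 ⟨_, hy.symm⟩

abbrev GData (G X : Type*) [Group G] (n : ℕ) :=
  Σ m : Finset.Icc 1 n, Σ L : {L : Subgroup G // L.index = m.1}, Σ φ : G ⧸ L.1 ↪ X,
    (G →* Equiv.Perm {y // ¬ y ∈ Set.range φ})

noncomputable def gmap {G X : Type*} [Group G] (n : ℕ) (D : GData G X n) : (G →* Equiv.Perm X) × X :=
  (glue D.2.1.1 D.2.2.1 D.2.2.2, D.2.2.1 (QuotientGroup.mk 1))

lemma gmap_bij {G X : Type*} [Group G] [Finite X] :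
    Function.Bijective (gmap (G := G) (X := X) (Nat.card X)) := by
  constructor
  · rintro ⟨⟨m, hm⟩, ⟨L, hL⟩, φ, β⟩ ⟨⟨m', hm'⟩, ⟨L', hL'⟩, φ', β'⟩ h
    have h1 : glue L φ β = glue L' φ' β' := congrArg Prod.fst h
    have h2 : φ (QuotientGroup.mk 1) = φ' (QuotientGroup.mk 1) := congrArg Prod.snd h
    have h3 : ∀ g : G, φ (QuotientGroup.mk g) = φ' (QuotientGroup.mk g) := by
      intro g
      have e1 := glue_in L φ β g (QuotientGroup.mk 1)
      have e2 := glue_in L' φ' β' g (QuotientGroup.mk 1)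
      rw [h1, h2, e2] at e1
      have e3 : g • (QuotientGroup.mk 1 : G ⧸ L) = QuotientGroup.mk g := by
        rw [MulAction.Quotient.smul_mk]; simp
      have e4 : g • (QuotientGroup.mk 1 : G ⧸ L') = QuotientGroup.mk g := by
        rw [MulAction.Quotient.smul_mk]; simp
      rw [e3, e4] at e1
      exact e1.symm
    have h4 : L = L' := by
      ext g
      have e1 : g ∈ L ↔ (QuotientGroup.mk 1 : G ⧸ L) = QuotientGroup.mk g := by
        rw [QuotientGroup.eq]; simp
      have e2 : g ∈ L' ↔ (QuotientGroup.mk 1 : G ⧸ L') = QuotientGroup.mk g := by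
        rw [QuotientGroup.eq]; simp
      rw [e1, e2, ← φ.injective.eq_iff, ← φ'.injective.eq_iff, h3, h3]
    subst h4
    have h5 : φ = φ' := by
      ext q
      obtain ⟨g, rfl⟩ := QuotientGroup.mk_surjective q
      exact h3 g
    subst h5
    have h6 : β = β' := by
      ext g y
      rw [← glue_out L φ β, ← glue_out L φ β', h1]
    subst h6
    simp only at hL hL'
    subst hL
    subst hL'
    rfl
  · rintro ⟨α, p⟩
    letI : MulAction G X := MulAction.compHom X α
    have hsm : ∀ (g : G) (y : X), g • y = α g y := fun g y => rfl
    let L := MulAction.stabilizer G p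
    let φ : G ⧸ L ↪ X := ⟨MulAction.ofQuotientStabilizer G p, MulAction.injective_ofQuotientStabilizer G p⟩
    have hφ : ∀ g : G, φ (QuotientGroup.mk g) = α g p := fun g => rfl
    have hr : ∀ (g : G) (y : X), y ∈ Set.range φ → α g y ∈ Set.range φ := by
      rintro g _ ⟨q, rfl⟩
      obtain ⟨k, rfl⟩ := QuotientGroup.mk_surjective q
      exact ⟨QuotientGroup.mk (g * k), by rw [hφ, hφ, map_mul]; rfl⟩
    have hr' : ∀ (g : G) (y : X), ¬ α g y ∈ Set.range φ ↔ ¬ y ∈ Set.range φ := by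
      intro g y
      rw [not_iff_not]
      refine ⟨fun h => ?_, hr g y⟩
      have := hr g⁻¹ _ h
      rwa [← Equiv.Perm.mul_apply, ← map_mul, inv_mul_cancel, map_one, Equiv.Perm.one_apply] at this
    let β : G →* Equiv.Perm {y // ¬ y ∈ Set.range φ} :=
      { toFun := fun g => (α g).subtypePerm (hr' g)
        map_one' := by ext y; simp
        map_mul' := fun g k => by
          ext y
          exact congrArg (fun e : Equiv.Perm X => e y) (map_mul α g k) }
    have hfin : Finite (G ⧸ L) := Finite.of_injective φ φ.injective
    have hne : Nonempty (G ⧸ L) := ⟨QuotientGroup.mk 1⟩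
    refine ⟨⟨⟨L.index, ?_⟩, ⟨L, rfl⟩, φ, β⟩, ?_⟩
    · rw [Finset.mem_Icc, Subgroup.index]
      exact ⟨Nat.card_pos, Nat.card_le_card_of_injective φ φ.injective⟩
    · refine Prod.ext ?_ ?_
      · change glue L φ β = α
        ext g y
        by_cases hy : y ∈ Set.range φ
        · obtain ⟨q, rfl⟩ := hy
          obtain ⟨k, rfl⟩ := QuotientGroup.mk_surjective q
          rw [glue_in, MulAction.Quotient.smul_mk, hφ, hφ]
          simp
        · exact glue_out L φ β g ⟨y, hy⟩
      · change φ (QuotientGroup.mk 1) = p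
        rw [hφ, map_one]; rfl

open Classical in
noncomputable def Zh (G X : Type*) [Group G] [Finite (G →* Equiv.Perm X)] (x : ℝ) : ℝ :=
  letI := Fintype.ofFinite (G →* Equiv.Perm X)
  ∑ α : G →* Equiv.Perm X, x ^ kap α

lemma Zh_def (G X : Type*) [Group G] [Finite (G →* Equiv.Perm X)] [Fintype (G →* Equiv.Perm X)] (x : ℝ) :
    Zh G X x = ∑ α : G →* Equiv.Perm X, x ^ kap α := by
  rw [Zh]
  congr!

lemma kap_congr {G X Y : Type*} [Group G] (e : X ≃ Y) (α : G →* Equiv.Perm X) :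
    kap ((e.permCongrHom.toMonoidHom).comp α) = kap α := by
  have : orbsets ((e.permCongrHom.toMonoidHom).comp α) = (fun s => e '' s) '' orbsets α := by
    ext s
    simp only [orbsets, Set.mem_image, Set.mem_range, exists_exists_eq_and]
    constructor
    · rintro ⟨y, rfl⟩
      refine ⟨e.symm y, ?_⟩
      rw [← Set.range_comp]; rfl
    · rintro ⟨y, rfl⟩
      refine ⟨e y, ?_⟩
      rw [← Set.range_comp]
      congr 1
      funext g
      simp [Equiv.permCongrHom]
  rw [kap, this, Set.ncard_image_of_injective _ (Set.image_injective.2 e.injective), kap]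

lemma Zh_congr {G X Y : Type*} [Group G] [Finite (G →* Equiv.Perm X)] [Finite (G →* Equiv.Perm Y)]
    (e : X ≃ Y) (x : ℝ) : Zh G X x = Zh G Y x := by
  letI := Fintype.ofFinite (G →* Equiv.Perm X)
  letI := Fintype.ofFinite (G →* Equiv.Perm Y)
  rw [Zh_def, Zh_def]
  let E : (G →* Equiv.Perm X) ≃ (G →* Equiv.Perm Y) :=
    { toFun := fun α => (e.permCongrHom.toMonoidHom).comp α
      invFun := fun α => (e.permCongrHom.symm.toMonoidHom).comp α
      left_inv := fun α => by ext g y; simp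
      right_inv := fun α => by ext g y; simp }
  refine Fintype.sum_equiv E _ _ fun α => ?_
  rw [← kap_congr e α]; rfl

lemma Zh_rec {G : Type} [Group G] (hG : ∀ X : Type, Finite X → Finite (G →* Equiv.Perm X))
    (hL : ∀ m ≠ 0, Finite {L : Subgroup G // L.index = m}) (n : ℕ) (x : ℝ) (Z : ℕ → ℝ)
    (hZ : ∀ k (_ : Finite (G →* Equiv.Perm (Fin k))), Z k = Zh G (Fin k) x) :
    n * Z n = x * ∑ m ∈ Finset.Icc 1 n,
      (Nat.card {L : Subgroup G // L.index = m} : ℝ) * (n.descFactorial m * Z (n - m)) := by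
  classical
  have hG' : ∀ (X : Type) [Finite X], Finite (G →* Equiv.Perm X) := fun X h => hG X h
  have hb := gmap_bij (G := G) (X := Fin n)
  rw [Nat.card_fin] at hb
  letI : ∀ (X : Type) [Finite X], Fintype (G →* Equiv.Perm X) := fun X h => Fintype.ofFinite _
  have hLne : ∀ m : Finset.Icc 1 n, m.1 ≠ 0 := fun m => by have := Finset.mem_Icc.1 m.2; omega
  letI : ∀ m : Finset.Icc 1 n, Fintype {L : Subgroup G // L.index = m.1} := fun m =>
    have := hL _ (hLne m)
    Fintype.ofFinite _
  letI hq : ∀ (m : Finset.Icc 1 n) (L : {L : Subgroup G // L.index = m.1}), Fintype (G ⧸ L.1) := fun m L =>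
    have : Finite (G ⧸ L.1) := by
      apply Nat.finite_of_card_ne_zero
      have := L.2
      rw [Subgroup.index] at this
      rw [this]; exact hLne m
    Fintype.ofFinite _
  have h1 : ∑ D : GData G (Fin n) n, x ^ (kap (gmap n D).1) =
      ∑ q : (G →* Equiv.Perm (Fin n)) × Fin n, x ^ (kap q.1) :=
    Fintype.sum_bijective _ hb _ _ fun D => rfl
  have h2 : ∑ q : (G →* Equiv.Perm (Fin n)) × Fin n, x ^ (kap q.1) = n * Z n := by
    rw [Fintype.sum_prod_type, hZ n (hG' _), Zh_def]
    simp [Finset.mul_sum]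
  rw [← h2, ← h1, Fintype.sum_sigma, Finset.mul_sum, ← Finset.sum_coe_sort (Finset.Icc 1 n)]
  apply Finset.sum_congr rfl
  intro m _
  rw [Fintype.sum_sigma]
  have h3 : ∀ L : {L : Subgroup G // L.index = m.1},
      ∑ y : (Σ φ : G ⧸ L.1 ↪ Fin n, (G →* Equiv.Perm {y // ¬ y ∈ Set.range φ})),
        x ^ (kap (gmap n (⟨m, L, y⟩ : GData G (Fin n) n)).1) = x * (n.descFactorial m * Z (n - m)) := by
    intro L
    have hcard : Fintype.card (G ⧸ L.1) = m.1 := by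
      rw [← Nat.card_eq_fintype_card]; exact L.2
    rw [Fintype.sum_sigma]
    have h4 : ∀ φ : G ⧸ L.1 ↪ Fin n, ∑ β : (G →* Equiv.Perm {y // ¬ y ∈ Set.range φ}),
        x ^ (kap (gmap n (⟨m, L, φ, β⟩ : GData G (Fin n) n)).1) = x * Z (n - m) := by
      intro φ
      have hc : Fintype.card {y // ¬ y ∈ Set.range φ} = n - m := by
        rw [Fintype.card_subtype_compl, Fintype.card_fin]
        have hc' : Fintype.card {y // y ∈ Set.range φ} = m :=
          (Fintype.card_congr (Equiv.ofInjective φ φ.injective)).symm.trans hcard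
        rw [hc']
      have e : {y // ¬ y ∈ Set.range φ} ≃ Fin (n - m) := Fintype.equivFinOfCardEq hc
      rw [hZ (n - m) (hG' _), ← Zh_congr e, Zh_def, Finset.mul_sum]
      apply Finset.sum_congr rfl
      intro β _
      change x ^ kap (glue L.1 φ β) = _
      rw [kap_glue, pow_succ]; ring
    rw [Finset.sum_congr rfl fun φ _ => h4 φ, Finset.sum_const, Finset.card_univ,
      Fintype.card_embedding_eq, hcard, Fintype.card_fin, nsmul_eq_mul]
    ring
  rw [Finset.sum_congr rfl fun L _ => h3 L, Finset.sum_const, Finset.card_univ, nsmul_eq_mul,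
    Nat.card_eq_fintype_card]
  ring

abbrev GZ (ℓ : ℕ) := Fin ℓ → Multiplicative ℤ

def genG {ℓ : ℕ} (i : Fin ℓ) : GZ ℓ := Pi.mulSingle i (Multiplicative.ofAdd 1)

lemma genG_zpow {ℓ : ℕ} (i : Fin ℓ) (z : Multiplicative ℤ) :
    (Pi.mulSingle i z : GZ ℓ) = genG i ^ (Multiplicative.toAdd z) := by
  rw [genG, ← Pi.mulSingle_zpow]
  congr 1
  rw [← ofAdd_zsmul]; simp

lemma mem_of_gens {ℓ : ℕ} (K : Subgroup (GZ ℓ)) (h : ∀ i, genG i ∈ K) (g : GZ ℓ) : g ∈ K := by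
  rw [← Finset.univ_prod_mulSingle g]
  refine Subgroup.prod_mem _ fun i _ => ?_
  rw [genG_zpow]
  exact Subgroup.zpow_mem _ (h i) _

def tupG {ℓ : ℕ} {X : Type*} (α : GZ ℓ →* Equiv.Perm X) :
    {σ : Fin ℓ → Equiv.Perm X // ∀ i j, σ i * σ j = σ j * σ i} :=
  ⟨fun i => α (genG i), fun i j => by rw [← map_mul, ← map_mul, mul_comm]⟩

lemma tupG_bij {ℓ : ℕ} {X : Type*} : Function.Bijective (tupG (ℓ := ℓ) (X := X)) := by
  constructor
  · intro α β h
    have h1 : ∀ i, α (genG i) = β (genG i) := fun i => congrFun (congrArg Subtype.val h) i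
    exact MonoidHom.ext fun g => mem_of_gens (MonoidHom.eqLocus α β) h1 g
  · rintro ⟨σ, hσ⟩
    have hc : Pairwise fun i j : Fin ℓ => ∀ x y : Multiplicative ℤ,
        Commute (zpowersHom (Equiv.Perm X) (σ i) x) (zpowersHom (Equiv.Perm X) (σ j) y) := by
      intro i j _ x y
      rw [zpowersHom_apply, zpowersHom_apply]
      exact Commute.zpow_zpow (hσ i j) _ _
    refine ⟨MonoidHom.noncommPiCoprod _ hc, ?_⟩
    apply Subtype.ext
    funext i
    change MonoidHom.noncommPiCoprod _ hc (Pi.mulSingle i _) = σ i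
    rw [MonoidHom.noncommPiCoprod_mulSingle, zpowersHom_apply]
    simp

lemma GZ_hom_finite (ℓ : ℕ) (X : Type) (_ : Finite X) : Finite (GZ ℓ →* Equiv.Perm X) :=
  Finite.of_injective _ (tupG_bij (ℓ := ℓ) (X := X)).1

lemma closure_tupG {ℓ : ℕ} {X : Type*} (α : GZ ℓ →* Equiv.Perm X) :
    Subgroup.closure (Set.range (tupG α).1) = α.range := by
  apply le_antisymm
  · rw [Subgroup.closure_le]
    rintro _ ⟨i, rfl⟩
    exact ⟨genG i, rfl⟩
  · rintro _ ⟨g, rfl⟩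
    exact mem_of_gens ((Subgroup.closure (Set.range (tupG α).1)).comap α)
      (fun i => Subgroup.subset_closure ⟨i, rfl⟩) g

lemma kappa_tupG {ℓ n : ℕ} (α : GZ ℓ →* Equiv.Perm (Fin n)) : kappa (tupG α).1 = kap α := by
  rw [kappa, closure_tupG, kap, ← Nat.card_coe_set_eq]
  have ho : ∀ x : Fin n, MulAction.orbit α.range x = Set.range (fun g => α g x) := by
    intro x
    ext y
    constructor
    · rintro ⟨⟨_, g, rfl⟩, rfl⟩
      exact ⟨g, rfl⟩
    · rintro ⟨g, rfl⟩
      exact ⟨⟨α g, g, rfl⟩, rfl⟩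
  have hr : orbsets α = Set.range (fun q : MulAction.orbitRel.Quotient α.range (Fin n) => q.orbit) := by
    ext s
    constructor
    · rintro ⟨x, rfl⟩
      exact ⟨Quotient.mk'' x, by simp only [MulAction.orbitRel.Quotient.orbit_mk, ho]⟩
    · rintro ⟨q, rfl⟩
      induction q using Quotient.inductionOn'
      rename_i x
      exact ⟨x, by simp only [MulAction.orbitRel.Quotient.orbit_mk, ho]⟩
  rw [hr]
  exact Nat.card_congr (Equiv.ofInjective _ MulAction.orbitRel.Quotient.orbit_injective)

lemma kap_le {G : Type*} [Group G] {n : ℕ} (α : G →* Equiv.Perm (Fin n)) : kap α ≤ n := by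
  rw [kap, orbsets, ← Nat.card_coe_set_eq]
  exact (Finite.card_range_le _).trans (by simp)

lemma sum_Acount (ℓ n : ℕ) (x : ℝ) (_ : Finite (GZ ℓ →* Equiv.Perm (Fin n))) :
    ∑ k ∈ Finset.range (n + 1), (Acount ℓ n k : ℝ) * x ^ k = Zh (GZ ℓ) (Fin n) x := by
  classical
  letI := Fintype.ofFinite (GZ ℓ →* Equiv.Perm (Fin n))
  rw [Zh_def, ← Finset.sum_fiberwise_of_maps_to (s := Finset.univ) (t := Finset.range (n + 1))
    (g := fun α : GZ ℓ →* Equiv.Perm (Fin n) => kap α)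
    (fun α _ => Finset.mem_range.2 (Nat.lt_succ_of_le (kap_le α)))]
  refine Finset.sum_congr rfl fun k _ => ?_
  have h1 : ∑ α : GZ ℓ →* Equiv.Perm (Fin n) with kap α = k, x ^ kap α =
      ∑ α : GZ ℓ →* Equiv.Perm (Fin n) with kap α = k, x ^ k := by
    refine Finset.sum_congr rfl fun α hα => ?_
    rw [(Finset.mem_filter.1 hα).2]
  rw [h1, Finset.sum_const, nsmul_eq_mul]
  congr 2
  rw [Acount, ← Fintype.card_subtype, ← Nat.card_eq_fintype_card]
  symm
  refine Nat.card_eq_of_bijective (fun α : {α : GZ ℓ →* Equiv.Perm (Fin n) // kap α = k} =>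
    ⟨(tupG α.1).1, (tupG α.1).2, (kappa_tupG α.1).trans α.2⟩) ⟨?_, ?_⟩
  · intro α β h
    have h' : (tupG α.1).1 = (tupG β.1).1 := (Subtype.ext_iff.1 h :)
    exact Subtype.ext (tupG_bij.1 (Subtype.ext h'))
  · rintro ⟨σ, h1, h2⟩
    obtain ⟨α, hα⟩ := tupG_bij.2 ⟨σ, h1⟩
    have h3 : (tupG α).1 = σ := congrArg Subtype.val hα
    refine ⟨⟨α, ?_⟩, Subtype.ext h3⟩
    rw [← kappa_tupG, h3, h2]

lemma sum_Acount_pos (ℓ n : ℕ) (x : ℝ) (hx : 0 < x) :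
    0 < ∑ k ∈ Finset.range (n + 1), (Acount ℓ n k : ℝ) * x ^ k := by
  have hf := GZ_hom_finite ℓ (Fin n) inferInstance
  letI := Fintype.ofFinite (GZ ℓ →* Equiv.Perm (Fin n))
  rw [sum_Acount ℓ n x hf, Zh_def]
  exact Finset.sum_pos (fun α _ => pow_pos hx _) ⟨1, Finset.mem_univ _⟩

lemma h_rec (ℓ : ℕ) (x : ℝ) (n : ℕ) :
    (n:ℝ) * ((∑ k ∈ Finset.range (n + 1), (Acount ℓ n k : ℝ) * x ^ k) / (n.factorial : ℝ)) =
      x * ∑ m ∈ Finset.Icc 1 n, sA ℓ m *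
        ((∑ k ∈ Finset.range (n - m + 1), (Acount ℓ (n - m) k : ℝ) * x ^ k) / ((n - m).factorial : ℝ)) := by
  have h := Zh_rec (G := GZ ℓ) (fun X hX => GZ_hom_finite ℓ X hX) (fun m hm => (count_subG ℓ m hm).1) n x
    (fun n => ∑ k ∈ Finset.range (n + 1), (Acount ℓ n k : ℝ) * x ^ k)
    (fun k hk => sum_Acount ℓ k x hk)
  have hn : (n.factorial : ℝ) ≠ 0 := by positivity
  rw [← mul_div_assoc, h, div_eq_iff hn, mul_assoc, Finset.sum_mul]
  congr 1
  refine Finset.sum_congr rfl fun m hm => ?_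
  obtain ⟨hm1, hm2⟩ := Finset.mem_Icc.1 hm
  rw [(count_subG ℓ m (by omega)).2, ← Nat.factorial_mul_descFactorial hm2]
  have hn' : ((n - m).factorial : ℝ) ≠ 0 := by positivity
  push_cast
  field_simp

lemma h_loglim (ℓ : ℕ) (hℓ : 2 ≤ ℓ) (x : ℝ) (hx : 0 < x) :
    Tendsto (fun n : ℕ => log ((∑ k ∈ Finset.range (n + 1), (Acount ℓ n k : ℝ) * x ^ k) / (n.factorial : ℝ)) /
      (n:ℝ) ^ (((ℓ:ℝ) - 1) / ℓ)) atTop (𝓝 ((ℓ:ℝ) / ((ℓ:ℝ) - 1) * (x * Kconst ℓ) ^ (1 / (ℓ:ℝ)))) := by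
  refine aux_loglim ℓ hℓ (fun m => sA ℓ m) (fun m => sA_nonneg ℓ m) (by simp) ?_ (Kconst ℓ) x
    (Kconst_pos ℓ) hx ?_ _ (fun n => div_pos (sum_Acount_pos ℓ n x hx) (by positivity)) (h_rec ℓ x)
  · obtain ⟨k, rfl⟩ : ∃ k, ℓ = k + 1 := ⟨ℓ - 1, by omega⟩
    exact fun t ht => (sA_F k t ht).summable
  · obtain ⟨k, rfl⟩ : ∃ k, ℓ = k + 1 := ⟨ℓ - 1, by omega⟩
    exact sA_lim k

lemma phi_deriv (ℓ : ℕ) (hℓ : 2 ≤ ℓ) (K x : ℝ) (hK : 0 < K) (hx : 0 < x) :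
    HasDerivAt (fun s => (ℓ:ℝ) / ((ℓ:ℝ) - 1) * (exp s * K) ^ (1 / (ℓ:ℝ)))
      ((x * K) ^ (1 / (ℓ:ℝ)) / ((ℓ:ℝ) - 1)) (log x) := by
  have hl : (ℓ:ℝ) ≠ 0 := by positivity
  have hl1 : (ℓ:ℝ) - 1 ≠ 0 := by
    have : (2:ℝ) ≤ ℓ := by exact_mod_cast hℓ
    intro h; linarith
  have h1 : HasDerivAt (fun s => exp s * K) (x * K) (log x) := by
    have := (Real.hasDerivAt_exp (log x)).mul_const K
    rwa [Real.exp_log hx] at this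
  have h2 := (h1.rpow_const (p := 1 / (ℓ:ℝ)) (Or.inl (by positivity))).const_mul ((ℓ:ℝ) / ((ℓ:ℝ) - 1))
  have e : (ℓ:ℝ) / ((ℓ:ℝ) - 1) * (x * K * (1 / (ℓ:ℝ)) * (exp (log x) * K) ^ (1 / (ℓ:ℝ) - 1)) =
      (x * K) ^ (1 / (ℓ:ℝ)) / ((ℓ:ℝ) - 1) := by
    rw [Real.exp_log hx, Real.rpow_sub_one (by positivity)]
    field_simp
  rw [e] at h2
  exact h2

/-- `E[K_{ℓ,n}] ~ ((x K_ℓ)^{1/ℓ}/(ℓ-1)) n^{(ℓ-1)/ℓ}` as `n → ∞`. -/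
theorem mean_asymptotic (ℓ : ℕ) (hℓ : 2 ≤ ℓ) (x : ℝ) (hx : 0 < x) :
    Tendsto (fun n : ℕ =>
        meanK ℓ n x /
          ((x * Kconst ℓ) ^ ((1 : ℝ) / (ℓ : ℝ)) / ((ℓ : ℝ) - 1) *
            (n : ℝ) ^ (((ℓ : ℝ) - 1) / (ℓ : ℝ))))
      atTop (nhds 1) := by
  have hK := Kconst_pos ℓ
  have hl1 : 0 < (ℓ:ℝ) - 1 := by
    have : (2:ℝ) ≤ ℓ := by exact_mod_cast hℓ
    linarith
  have hD : 0 < (x * Kconst ℓ) ^ ((1 : ℝ) / (ℓ : ℝ)) / ((ℓ : ℝ) - 1) := by positivity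
  have key := aux_slope
    (fun n s => log ((∑ k ∈ Finset.range (n + 1), (Acount ℓ n k : ℝ) * (exp s) ^ k) / (n.factorial : ℝ)) /
      (n:ℝ) ^ (((ℓ:ℝ) - 1) / ℓ))
    (fun s => (ℓ:ℝ) / ((ℓ:ℝ) - 1) * (exp s * Kconst ℓ) ^ (1 / (ℓ:ℝ)))
    (fun n => meanK ℓ n x / (n:ℝ) ^ (((ℓ:ℝ) - 1) / ℓ)) (log x)
    ((x * Kconst ℓ) ^ ((1 : ℝ) / (ℓ : ℝ)) / ((ℓ : ℝ) - 1))
    (fun s => h_loglim ℓ hℓ (exp s) (exp_pos s)) (phi_deriv ℓ hℓ _ x hK hx) (by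
      filter_upwards [eventually_ge_atTop 1] with n hn s
      have hn' : 0 < (n:ℝ) ^ (((ℓ:ℝ) - 1) / ℓ) := Real.rpow_pos_of_pos (by exact_mod_cast hn) _
      have hj := aux_jensen (n + 1) (fun k => (Acount ℓ n k : ℝ)) (fun k => by positivity) x hx
        (fun y hy => sum_Acount_pos ℓ n y hy) s
      have hf : (n.factorial : ℝ) ≠ 0 := by positivity
      rw [Real.exp_log hx, Real.log_div (sum_Acount_pos ℓ n _ (exp_pos s)).ne' hf,
        Real.log_div (sum_Acount_pos ℓ n x hx).ne' hf, ← sub_div, ← mul_div_assoc]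
      apply div_le_div_of_nonneg_right _ hn'.le
      rw [meanK, expectK]
      linarith)
  have h2 := key.div_const ((x * Kconst ℓ) ^ ((1 : ℝ) / (ℓ : ℝ)) / ((ℓ : ℝ) - 1))
  rw [div_self hD.ne'] at h2
  refine h2.congr fun n => ?_
  rw [div_div, mul_comm ((n:ℝ) ^ _)]
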